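/- Let p ≥ 1 be an integer and a > 2p a real number. Assume (ε_n) is a martingale difference sequence with E[ε_{n+1}² | F_n] = σ² a.s. for all n and sup_{n≥0} E[|ε_{n+1}|^a | F_n] < ∞ a.s. Assume the explosion coefficient f_n tends to zero a.s. and that there exists a positive random sequence (α_n) increasing to infinity and a symmetric positive definite d×d matrix L such that S_n/α_n → L a.s. Then almost surely lim_{n→∞} (1/log d_n) Σ_{k=1}^n [ (M_k^t S_{k-1}^{-1} M_k)^p − (M_k^t S_k^{-1} M_k)^p ] = λ(p), where λ(p) = (p/d) ℓ(p) and ℓ(p) = d σ^{2p} ∏_{j=1}^{p-1} (d + 2j). -/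

import Mathlib

open MeasureTheory ProbabilityTheory Filter Finset Matrix Topology

noncomputable section

/-- `S_n = S + ∑_{k=0}^n Φ_k Φ_kᵗ`. -/
def Smat {Ω : Type*} {d : ℕ} (S : Matrix (Fin d) (Fin d) ℝ)
    (Φ : ℕ → Ω → Fin d → ℝ) (n : ℕ) (ω : Ω) : Matrix (Fin d) (Fin d) ℝ :=
  S + ∑ k ∈ Finset.range (n + 1), vecMulVec (Φ k ω) (Φ k ω)

/-- The explosion coefficient `f_n = Φ_nᵗ S_n⁻¹ Φ_n`. -/
def expl {Ω : Type*} {d : ℕ} (S : Matrix (Fin d) (Fin d) ℝ)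
    (Φ : ℕ → Ω → Fin d → ℝ) (n : ℕ) (ω : Ω) : ℝ :=
  Φ n ω ⬝ᵥ ((Smat S Φ n ω)⁻¹ *ᵥ Φ n ω)

/-- The vector martingale transform `M_n = M_0 + ∑_{k=1}^n Φ_{k-1} ε_k`. -/
def Mart {Ω : Type*} {d : ℕ} (M0 : Ω → Fin d → ℝ) (Φ : ℕ → Ω → Fin d → ℝ)
    (ε : ℕ → Ω → ℝ) (n : ℕ) (ω : Ω) : Fin d → ℝ :=
  M0 ω + ∑ k ∈ Finset.range n, ε (k + 1) ω • Φ k ω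

/-- `ℓ(p) = d σ^{2p} ∏_{j=1}^{p-1} (d + 2j)`. -/
def elllim (d p : ℕ) (σ : ℝ) : ℝ :=
  (d : ℝ) * σ ^ (2 * p) * ∏ j ∈ Finset.Icc 1 (p - 1), ((d : ℝ) + 2 * (j : ℝ))

/-!
Replace `S_{n-1}` by `T_n L`, where `T_n = 1 + d⁻¹ ∑_{k<n} Φ_kᵗ L⁻¹ Φ_k` is a scalar clock; taking
the trace of `L⁻¹ S_n` shows that `S_{n-1} / T_n → L`, so that `log d_n ∼ d log T_n`. The scalar
model `V_n = M_nᵗ L⁻¹ M_n / T_n` satisfies `V_{k+1} = A_k + 2 ε_{k+1} β_k + ε_{k+1}² γ_k`, where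
`A_k = M_kᵗ L⁻¹ M_k / T_{k+1}`, `β_k = Φ_kᵗ L⁻¹ M_k / T_{k+1}`, `γ_k = Φ_kᵗ L⁻¹ Φ_k / T_{k+1}`,
and `V_k - A_k` is `V_k γ_k / d`. The true forms, with `S_k⁻¹` in place of `L⁻¹ / T_{k+1}`,
obey the same recursion, and by the Sherman–Morrison formula they satisfy
`V'_k - A'_k = β'_k² / (1 - γ'_k)`.

The Robbins–Siegmund theorem applied to `V_n^r / (1 + log T_n)^κ` controls the moments of the model,
hence those of the true forms; Kronecker's lemma and a martingale law of large numbers then allow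
`ε_{k+1}²` to be replaced by `σ²` in averages along the clock. Expanding `V_{k+1}^q` in both
recursions, telescoping, and eliminating the average of `A^{q-1} β²` between them expresses the mean
of `γ A^q` through that of `γ A^{q-1}`, and induction on `q` produces the product `∏ (d + 2j)`.
-/

section LocalMartingaleDifference

variable {Ω : Type*} {m m0 : MeasurableSpace Ω} {μ : Measure Ω}

/-- `Y` is a local martingale difference over `m`: although `Y` need not be integrable, `Ω` is an
increasing union of `m`-measurable sets on each of which it is integrable and has vanishing
conditional expectation given `m`. -/
def IsLocalMDiff (μ : Measure Ω) (m : MeasurableSpace Ω) (Y : Ω → ℝ) : Prop :=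
  ∃ E : ℕ → Set Ω, Monotone E ∧ ⋃ n, E n = Set.univ ∧ ∀ n, MeasurableSet[m] (E n) ∧
    Integrable ((E n).indicator Y) μ ∧ μ[(E n).indicator Y | m] =ᵐ[μ] 0

lemma condExp_indicator_eq_zero {f : Ω → ℝ} {s : Set Ω} (hs : MeasurableSet[m] s)
    (hf : Integrable f μ) (h0 : μ[f | m] =ᵐ[μ] 0) : μ[s.indicator f | m] =ᵐ[μ] 0 := by
  filter_upwards [condExp_indicator hf hs, h0] with ω h1 h2
  simp only [h1, Set.indicator, h2, Pi.zero_apply, ite_self]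

lemma isLocalMDiff_sub_of_condExp_ae_eq [IsFiniteMeasure μ] (hm : m ≤ m0) {f g : Ω → ℝ}
    (hf : Integrable f μ) (hg : μ[f | m] =ᵐ[μ] g) : IsLocalMDiff μ m (fun ω => f ω - g ω) := by
  have hgint : Integrable g μ := integrable_condExp.congr hg
  have hgcond : μ[g | m] =ᵐ[μ] g := by
    filter_upwards [condExp_congr_ae hg.symm, hg] with ω h hω
    rw [h, condExp_of_stronglyMeasurable hm stronglyMeasurable_condExp integrable_condExp, hω]
  refine ⟨fun _ => Set.univ, monotone_const, Set.iUnion_const _, fun _ => ⟨.univ, ?_, ?_⟩⟩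
  · rw [Set.indicator_univ]
    exact hf.sub hgint
  · rw [Set.indicator_univ]
    filter_upwards [condExp_sub hf hgint m, hg, hgcond] with ω h hω hω'
    exact h.trans (by rw [Pi.sub_apply, hω, hω', sub_self, Pi.zero_apply])

namespace IsLocalMDiff

lemma mul_left [IsFiniteMeasure μ] (hm : m ≤ m0) {c Y : Ω → ℝ} (hc : Measurable[m] c)
    (hY : IsLocalMDiff μ m Y) : IsLocalMDiff μ m (fun ω => c ω * Y ω) := by
  obtain ⟨E, hmono, hcover, hE⟩ := hY
  set D : ℕ → Set Ω := fun n => {ω | |c ω| ≤ n}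
  have hDm (n : ℕ) : MeasurableSet[m] (D n) :=
    (measurable_abs.comp hc) measurableSet_Iic
  have hDmono : Monotone D := fun i j hij ω (hω : |c ω| ≤ i) => hω.trans (Nat.cast_le.2 hij)
  refine ⟨fun n => E n ∩ D n, hmono.inter hDmono, Set.eq_univ_of_forall fun ω => ?_, fun n => ?_⟩
  · obtain ⟨i, hi⟩ := Set.mem_iUnion.1 (hcover ▸ Set.mem_univ ω)
    obtain ⟨j, hj⟩ := exists_nat_ge |c ω|
    exact Set.mem_iUnion.2 ⟨max i j, hmono (le_max_left i j) hi, hDmono (le_max_right i j) hj⟩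
  obtain ⟨hEm, hint, h0⟩ := hE n
  have hfactor : (E n ∩ D n).indicator (fun ω => c ω * Y ω) =
      (D n).indicator c * (E n).indicator Y := by
    rw [Set.inter_comm]
    exact funext fun ω => Set.inter_indicator_mul c Y ω
  have hbdd : ∀ᵐ ω ∂μ, ‖(D n).indicator c ω‖ ≤ n := .of_forall fun ω => by
    by_cases hω : ω ∈ D n
    · rwa [Set.indicator_of_mem hω]
    · simp only [Set.indicator_of_notMem hω, norm_zero, Nat.cast_nonneg]
  have hcsm : StronglyMeasurable[m] ((D n).indicator c) := (hc.indicator (hDm n)).stronglyMeasurable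
  refine ⟨hEm.inter (hDm n), ?_, ?_⟩ <;> rw [hfactor]
  · exact hint.bdd_mul (hcsm.mono hm).aestronglyMeasurable hbdd
  · filter_upwards [condExp_stronglyMeasurable_mul_of_bound hm hcsm hint n hbdd, h0] with ω h1 h2
    rw [h1, Pi.mul_apply, h2, Pi.zero_apply, mul_zero]

lemma add (hm : m ≤ m0) {Y Z : Ω → ℝ} (hY : IsLocalMDiff μ m Y) (hZ : IsLocalMDiff μ m Z) :
    IsLocalMDiff μ m (fun ω => Y ω + Z ω) := by
  obtain ⟨E, hEmono, hEcover, hE⟩ := hY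
  obtain ⟨D, hDmono, hDcover, hD⟩ := hZ
  refine ⟨fun n => E n ∩ D n, hEmono.inter hDmono, ?_, fun n => ?_⟩
  · rw [Set.iUnion_inter_of_monotone hEmono hDmono, hEcover, hDcover, Set.inter_univ]
  obtain ⟨hEm, hEint, hE0⟩ := hE n
  obtain ⟨hDm, hDint, hD0⟩ := hD n
  have hsplit : (E n ∩ D n).indicator (fun ω => Y ω + Z ω) =
      (D n).indicator ((E n).indicator Y) + (E n).indicator ((D n).indicator Z) := by
    rw [Set.indicator_indicator, Set.indicator_indicator, Set.inter_comm (D n)]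
    exact Set.indicator_add _ Y Z
  have hYint := hEint.indicator (hm _ hDm)
  have hZint := hDint.indicator (hm _ hEm)
  refine ⟨hEm.inter hDm, ?_, ?_⟩ <;> rw [hsplit]
  · exact hYint.add hZint
  · filter_upwards [condExp_add hYint hZint m, condExp_indicator_eq_zero hDm hEint hE0,
      condExp_indicator_eq_zero hEm hDint hD0] with ω h h1 h2
    rw [h, Pi.add_apply, h1, h2, Pi.zero_apply, add_zero]

-- Borel–Cantelli chooses the localizing sets of the `k`-th difference so large that almost every
-- `ω` misses only finitely many of them.
lemma exists_localizing_sets [IsFiniteMeasure μ] {F : Filtration ℕ m0} {Y : ℕ → Ω → ℝ}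
    (hY : ∀ k, IsLocalMDiff μ (F k) (Y k)) :
    ∃ E : ℕ → ℕ → Set Ω, (∀ N k, MeasurableSet[F k] (E N k) ∧
      Integrable ((E N k).indicator (Y k)) μ ∧ μ[(E N k).indicator (Y k) | F k] =ᵐ[μ] 0) ∧
      ∀ᵐ ω ∂μ, ∃ N₀, ∀ N ≥ N₀, ∀ k, ω ∈ E N k := by
  choose E hmono hcover hE using hY
  obtain ⟨δ, hδ, hδsum⟩ := ENNReal.exists_pos_sum_of_countable' (ε := 1) one_ne_zero ℕ
  have hsmall (k : ℕ) : ∃ n, μ (E k n)ᶜ < δ k := by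
    have hanti : Antitone fun n => (E k n)ᶜ := fun i j hij => Set.compl_subset_compl.2 (hmono k hij)
    have hlim := tendsto_measure_iInter_atTop (μ := μ)
      (fun n => ((F.le k _ (hE k n).1).compl).nullMeasurableSet) hanti ⟨0, measure_ne_top _ _⟩
    rw [← Set.compl_iUnion, hcover, Set.compl_univ, measure_empty] at hlim
    exact (hlim.eventually_lt_const (hδ k)).exists
  choose n hn using hsmall
  refine ⟨fun N k => E k (n k + N), fun N k => hE k _, ?_⟩
  have hsum : ∑' k, μ (E k (n k))ᶜ ≠ ⊤ :=
    ne_top_of_le_ne_top hδsum.ne_top (ENNReal.tsum_le_tsum fun k => (hn k).le)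
  filter_upwards [ae_eventually_notMem hsum] with ω hω
  obtain ⟨k₀, hk₀⟩ := eventually_atTop.1 hω
  choose i hi using fun k => Set.mem_iUnion.1 ((hcover k).symm ▸ Set.mem_univ ω)
  refine ⟨(range k₀).sup i, fun N hN k => ?_⟩
  rcases le_or_gt k₀ k with hk | hk
  · exact hmono k (Nat.le_add_right _ _) (Set.notMem_compl_iff.1 (hk₀ k hk))
  · have hik : i k ≤ N := (Finset.le_sup (f := i) (mem_range.2 hk)).trans hN
    exact hmono k (by omega) (hi k)

end IsLocalMDiff

lemma ae_exists_tendsto_of_neg_const_le [IsProbabilityMeasure μ] {F : Filtration ℕ m0}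
    {f : ℕ → Ω → ℝ} (hf : Martingale f F μ) {c : ℝ} (hc : ∀ᵐ ω ∂μ, ∀ n, -c ≤ f n ω) :
    ∀ᵐ ω ∂μ, ∃ l, Tendsto (fun n => f n ω) atTop (𝓝 l) := by
  set R : ℝ := ∫ ω, f 0 ω ∂μ + 2 * |c|
  refine hf.submartingale.exists_ae_tendsto_of_bdd (R := R.toNNReal) fun n => ?_
  have hint : ∫ ω, ‖f n ω‖ ∂μ ≤ ∫ ω, (f n ω + 2 * |c|) ∂μ := by
    refine integral_mono_ae (hf.integrable n).norm ((hf.integrable n).add (integrable_const _)) ?_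
    filter_upwards [hc] with ω hω
    have := hω n
    have := le_abs_self c
    exact abs_le.2 ⟨by linarith, by linarith [abs_nonneg c]⟩
  have hmean : ∫ ω, (f n ω + 2 * |c|) ∂μ = R := by
    rw [integral_add (hf.integrable n) (integrable_const _), integral_const, probReal_univ,
      one_smul, ← setIntegral_univ, ← hf.setIntegral_eq (Nat.zero_le n) .univ, setIntegral_univ]
  rw [eLpNorm_one_eq_lintegral_enorm, ← ofReal_integral_norm_eq_lintegral_enorm (hf.integrable n)]
  exact ENNReal.ofReal_le_ofReal (hint.trans_eq hmean)

lemma martingale_sum_range [IsFiniteMeasure μ] {F : Filtration ℕ m0} {Y : ℕ → Ω → ℝ}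
    (hYm : ∀ k, Measurable[F (k + 1)] (Y k)) (hint : ∀ k, Integrable (Y k) μ)
    (h0 : ∀ k, μ[Y k | F k] =ᵐ[μ] 0) : Martingale (fun n ω => ∑ k ∈ range n, Y k ω) F μ := by
  refine martingale_of_condExp_sub_eq_zero_nat (fun n => Measurable.stronglyMeasurable ?_)
    (fun n => integrable_finsetSum _ fun k _ => hint k) fun n => ?_
  · exact Finset.measurable_fun_sum _ fun k hk =>
      (hYm k).mono (F.mono (mem_range.1 hk)) le_rfl
  · have hinc : ((fun ω => ∑ k ∈ range (n + 1), Y k ω) - fun ω => ∑ k ∈ range n, Y k ω) = Y n := by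
      ext ω
      simp only [Pi.sub_apply, sum_range_succ, add_sub_cancel_left]
    exact hinc ▸ h0 n

lemma neg_le_sum_indicator_of_antitone {A : ℕ → Set Ω} (hA : Antitone A) {y : ℕ → ℝ} {c : ℝ}
    {ω : Ω} (hc : 0 ≤ c) (hle : ∀ n, ω ∈ A n → -c ≤ ∑ k ∈ range (n + 1), y k) (n : ℕ) :
    -c ≤ ∑ k ∈ range n, (A k).indicator (fun _ => y k) ω := by
  induction n with
  | zero => simpa using hc
  | succ n ih =>
    by_cases h : ω ∈ A n
    · refine (hle n h).trans_eq (sum_congr rfl fun k hk => ?_)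
      rw [Set.indicator_of_mem (hA (Nat.lt_succ_iff.1 (mem_range.1 hk)) h)]
    · rwa [sum_range_succ, Set.indicator_of_notMem h, add_zero]

lemma ae_exists_tendsto_sum_of_predictable_lower_bound [IsProbabilityMeasure μ]
    {F : Filtration ℕ m0} {Y B : ℕ → Ω → ℝ} (hY : ∀ k, IsLocalMDiff μ (F k) (Y k))
    (hYm : ∀ k, Measurable[F (k + 1)] (Y k)) (hBm : ∀ k, Measurable[F k] (B k))
    (hle : ∀ᵐ ω ∂μ, ∀ n, -B n ω ≤ ∑ k ∈ range (n + 1), Y k ω)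
    (hB : ∀ᵐ ω ∂μ, ∃ C, ∀ n, B n ω ≤ C) :
    ∀ᵐ ω ∂μ, ∃ l, Tendsto (fun n => ∑ k ∈ range n, Y k ω) atTop (𝓝 l) := by
  obtain ⟨E, hE, hcover⟩ := IsLocalMDiff.exists_localizing_sets hY
  set A : ℕ → ℕ → Set Ω := fun N k => ⋂ j ∈ range (k + 1), E N j ∩ {ω | B j ω ≤ N} with hA
  have hAmem {N k ω} : ω ∈ A N k ↔ ∀ j ≤ k, ω ∈ E N j ∧ B j ω ≤ N := by
    simp only [hA, Set.mem_iInter, mem_range, Nat.lt_succ_iff]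
    rfl
  have hAanti (N : ℕ) : Antitone (A N) := fun i j hij ω hω =>
    hAmem.2 fun k hk => hAmem.1 hω k (hk.trans hij)
  have hAm (N k : ℕ) : MeasurableSet[F k] (A N k) :=
    Finset.measurableSet_biInter _ fun j hj => F.mono (Nat.lt_succ_iff.1 (mem_range.1 hj)) _
      ((hE N j).1.inter (hBm j measurableSet_Iic))
  have hAE (N k : ℕ) : (A N k).indicator (Y k) = (A N k).indicator ((E N k).indicator (Y k)) := by
    rw [Set.indicator_indicator, Set.inter_eq_left.2 fun ω hω => (hAmem.1 hω k le_rfl).1]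
  have hstopped (N : ℕ) : ∀ᵐ ω ∂μ, ∃ l,
      Tendsto (fun n => ∑ k ∈ range n, (A N k).indicator (Y k) ω) atTop (𝓝 l) := by
    refine ae_exists_tendsto_of_neg_const_le (c := N) (martingale_sum_range
      (fun k => (hYm k).indicator (F.mono k.le_succ _ (hAm N k)))
      (fun k => hAE N k ▸ (hE N k).2.1.indicator (F.le k _ (hAm N k)))
      (fun k => hAE N k ▸ condExp_indicator_eq_zero (hAm N k) (hE N k).2.1 (hE N k).2.2)) ?_
    filter_upwards [hle] with ω hω
    exact neg_le_sum_indicator_of_antitone (hAanti N) (Nat.cast_nonneg N) fun n hn =>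
      (neg_le_neg (hAmem.1 hn n le_rfl).2).trans (hω n)
  filter_upwards [ae_all_iff.2 hstopped, hB, hcover] with ω hlim ⟨C, hC⟩ ⟨N₀, hN₀⟩
  obtain ⟨N₁, hN₁⟩ := exists_nat_ge C
  obtain ⟨l, hl⟩ := hlim (max N₀ N₁)
  have hω (k : ℕ) : ω ∈ A (max N₀ N₁) k := hAmem.2 fun j _ => ⟨hN₀ _ (le_max_left _ _) j,
    (hC j).trans (hN₁.trans (Nat.cast_le.2 (le_max_right _ _)))⟩
  exact ⟨l, hl.congr fun n => sum_congr rfl fun k _ => Set.indicator_of_mem (hω k) _⟩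

/-- **Robbins–Siegmund theorem**, for increments that are only locally integrable. -/
theorem robbins_siegmund [IsProbabilityMeasure μ] {F : Filtration ℕ m0} {V Y B C : ℕ → Ω → ℝ}
    (hY : ∀ k, IsLocalMDiff μ (F k) (Y k)) (hYm : ∀ k, Measurable[F (k + 1)] (Y k))
    (hV0 : Measurable[F 0] (V 0)) (hBm : ∀ k, Measurable[F k] (B k))
    (hV : ∀ᵐ ω ∂μ, ∀ k, 0 ≤ V k ω) (hB : ∀ k ω, 0 ≤ B k ω) (hC : ∀ k ω, 0 ≤ C k ω)
    (hstep : ∀ᵐ ω ∂μ, ∀ k, V (k + 1) ω + C k ω ≤ V k ω + Y k ω + B k ω)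
    (hBsum : ∀ᵐ ω ∂μ, Summable fun k => B k ω) :
    ∀ᵐ ω ∂μ, (∃ l, Tendsto (fun n => ∑ k ∈ range n, Y k ω) atTop (𝓝 l)) ∧
      (Summable fun k => C k ω) ∧ ∃ K, ∀ n, V n ω ≤ K := by
  have hsum : ∀ᵐ ω ∂μ, ∀ n, V n ω + ∑ k ∈ range n, C k ω ≤
      V 0 ω + ∑ k ∈ range n, Y k ω + ∑ k ∈ range n, B k ω := by
    filter_upwards [hstep] with ω h n
    induction n with
    | zero => simp
    | succ n ih =>
      simp only [sum_range_succ]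
      linarith [h n]
  have hconv := ae_exists_tendsto_sum_of_predictable_lower_bound hY hYm
    (B := fun n ω => V 0 ω + ∑ k ∈ range (n + 1), B k ω)
    (fun n => (hV0.mono (F.mono n.zero_le) le_rfl).add (Finset.measurable_fun_sum _ fun k hk =>
      (hBm k).mono (F.mono (Nat.lt_succ_iff.1 (mem_range.1 hk))) le_rfl))
    (by
      filter_upwards [hsum, hV] with ω h hV n
      linarith [h (n + 1), hV (n + 1), sum_nonneg fun k (_ : k ∈ range (n + 1)) => hC k ω])
    (by
      filter_upwards [hBsum] with ω h
      exact ⟨V 0 ω + ∑' k, B k ω, fun n =>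
        add_le_add_right (h.sum_le_tsum _ fun k _ => hB k ω) _⟩)
  filter_upwards [hconv, hsum, hV, hBsum] with ω ⟨l, hl⟩ hsum hV hBsum
  obtain ⟨M, hM⟩ := hl.bddAbove_range
  have hYle (n : ℕ) : ∑ k ∈ range n, Y k ω ≤ M := hM ⟨n, rfl⟩
  have hBle (n : ℕ) := hBsum.sum_le_tsum (range n) fun k _ => hB k ω
  refine ⟨⟨l, hl⟩, summable_of_sum_range_le (c := V 0 ω + M + ∑' k, B k ω) (fun k => hC k ω)
    fun n => ?_, V 0 ω + M + ∑' k, B k ω, fun n => ?_⟩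
  · linarith [hsum n, hYle n, hBle n, hV n]
  · linarith [hsum n, hYle n, hBle n, sum_nonneg fun k (_ : k ∈ range n) => hC k ω]

end LocalMartingaleDifference

section Chow

lemma abs_add_rpow_le_of_abs_le_two_mul {b x y : ℝ} (hb : 1 < b) (hb2 : b ≤ 2)
    (h : |x| ≤ 2 * |y|) :
    |x + y| ^ b ≤ |x| ^ b + b * (x * |x| ^ (b - 2)) * y + 13 * |y| ^ b := by
  have hsum : |x + y| ^ b ≤ 9 * |y| ^ b := by
    calc |x + y| ^ b ≤ (3 * |y|) ^ b := by
          gcongr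
          linarith [abs_add_le x y]
      _ ≤ 9 * |y| ^ b := by
          rw [Real.mul_rpow (by norm_num) (abs_nonneg y)]
          gcongr
          calc (3 : ℝ) ^ b ≤ 3 ^ (2 : ℝ) := by gcongr; norm_num
            _ = 9 := by norm_num
  have hcross : |b * (x * |x| ^ (b - 2)) * y| ≤ 4 * |y| ^ b := by
    have hsplit (z : ℝ) : |z| ^ (b - 1) * |z| = |z| ^ b := by
      rw [← Real.rpow_add_one' (abs_nonneg z) (by linarith), sub_add_cancel]
    have hpow : |x| * |x| ^ (b - 2) ≤ 2 * |y| ^ (b - 1) := by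
      rcases eq_or_ne x 0 with rfl | hx
      · simp only [abs_zero, zero_mul]
        positivity
      calc |x| * |x| ^ (b - 2) = |x| ^ (b - 1) := by
            rw [mul_comm, ← Real.rpow_add_one (abs_pos.2 hx).ne']
            ring_nf
        _ ≤ (2 * |y|) ^ (b - 1) := by
            gcongr
        _ = 2 ^ (b - 1) * |y| ^ (b - 1) := Real.mul_rpow zero_le_two (abs_nonneg y)
        _ ≤ 2 * |y| ^ (b - 1) := by
            gcongr
            exact (Real.rpow_le_rpow_of_exponent_le one_le_two (by linarith)).trans_eq
              (Real.rpow_one 2)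
    calc |b * (x * |x| ^ (b - 2)) * y| = b * (|x| * |x| ^ (b - 2)) * |y| := by
          rw [abs_mul, abs_mul, abs_mul, abs_of_pos (by linarith : 0 < b),
            abs_of_nonneg (Real.rpow_nonneg (abs_nonneg x) _)]
      _ ≤ 2 * (2 * |y| ^ (b - 1)) * |y| := by gcongr
      _ = 4 * |y| ^ b := by rw [← hsplit y]; ring
  linarith [neg_le_of_abs_le hcross, Real.rpow_nonneg (abs_nonneg x) b]

lemma one_add_rpow_le_of_abs_le_half {b u : ℝ} (hb : 1 < b) (hb2 : b ≤ 2) (hu : |u| ≤ 1 / 2) :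
    (1 + u) ^ b ≤ 1 + b * u + |u| ^ b := by
  obtain ⟨hu₁, -⟩ := abs_le.1 hu
  have hbernoulli : (1 + u) ^ (b - 1) ≤ 1 + (b - 1) * u :=
    rpow_one_add_le_one_add_mul_self (by linarith) (by linarith) (by linarith)
  have hsq : u ^ 2 ≤ |u| ^ b := by
    rw [← sq_abs, ← Real.rpow_two]
    exact Real.rpow_le_rpow_of_exponent_ge' (abs_nonneg u) (by linarith) (by linarith) hb2
  calc (1 + u) ^ b = (1 + u) ^ (b - 1) * (1 + u) := by
        rw [← Real.rpow_add_one (by linarith), sub_add_cancel]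
    _ ≤ (1 + (b - 1) * u) * (1 + u) := by gcongr; linarith
    _ ≤ 1 + b * u + |u| ^ b := by nlinarith [sq_nonneg u]

lemma abs_add_rpow_le {b : ℝ} (hb : 1 < b) (hb2 : b ≤ 2) (x y : ℝ) :
    |x + y| ^ b ≤ |x| ^ b + b * (x * |x| ^ (b - 2)) * y + 13 * |y| ^ b := by
  rcases le_or_gt |x| (2 * |y|) with h | h
  · exact abs_add_rpow_le_of_abs_le_two_mul hb hb2 h
  have hx : 0 < |x| := by linarith [abs_nonneg y]
  obtain ⟨u, rfl⟩ : ∃ u, y = x * u := ⟨y / x, by field_simp [abs_pos.1 hx]⟩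
  rw [abs_mul] at h
  have hu : |u| ≤ 1 / 2 := by nlinarith
  have hpow : x * |x| ^ (b - 2) * x = |x| ^ b := by
    rw [mul_right_comm, ← abs_mul_abs_self, ← pow_two, ← Real.rpow_natCast, ← Real.rpow_add hx]
    norm_num
  have hpos : 0 ≤ 1 + u := by linarith [(abs_le.1 hu).1]
  calc |x + x * u| ^ b = |x| ^ b * (1 + u) ^ b := by
        rw [← mul_one_add, abs_mul, abs_of_nonneg hpos, Real.mul_rpow hx.le hpos]
    _ ≤ |x| ^ b * (1 + b * u + 13 * |u| ^ b) := by
        gcongr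
        linarith [one_add_rpow_le_of_abs_le_half hb hb2 hu, Real.rpow_nonneg (abs_nonneg u) b]
    _ = |x| ^ b + b * (x * |x| ^ (b - 2)) * (x * u) + 13 * |x * u| ^ b := by
        rw [abs_mul, Real.mul_rpow hx.le (abs_nonneg u)]
        linear_combination -b * u * hpow

lemma abs_sub_rpow_le_two_mul {b : ℝ} (hb : 1 ≤ b) (hb2 : b ≤ 2) (u v : ℝ) :
    |u - v| ^ b ≤ 2 * (|u| ^ b + |v| ^ b) := by
  calc |u - v| ^ b ≤ (|u| + |v|) ^ b := by gcongr; exact abs_sub u v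
    _ ≤ 2 ^ (b - 1) * (|u| ^ b + |v| ^ b) :=
        mod_cast NNReal.rpow_add_le_mul_rpow_add_rpow (Real.nnabs u) (Real.nnabs v) hb
    _ ≤ 2 * (|u| ^ b + |v| ^ b) := by
        gcongr
        exact (Real.rpow_le_rpow_of_exponent_le one_le_two (by linarith)).trans_eq (Real.rpow_one 2)

lemma abs_le_one_add_abs_rpow {b : ℝ} (hb : 1 ≤ b) (x : ℝ) : |x| ≤ 1 + |x| ^ b := by
  rcases le_total |x| 1 with h | h
  · linarith [Real.rpow_nonneg (abs_nonneg x) b]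
  · linarith [(Real.rpow_one |x|).symm.le.trans (Real.rpow_le_rpow_of_exponent_le h hb)]

lemma abs_add_mul_sub_rpow_le {b E x c y e : ℝ} (hb : 1 < b) (hb2 : b ≤ 2) (hE : |e| ^ b ≤ E) :
    |x + c * (y - e)| ^ b ≤ |x| ^ b + (b * (x * |x| ^ (b - 2)) * c * (y - e) +
      26 * |c| ^ b * (|y| ^ b - E)) + 52 * (|c| ^ b * |E|) := by
  have hc : 0 ≤ |c| ^ b := by positivity
  have hye : |c| ^ b * |y - e| ^ b ≤ |c| ^ b * (2 * (|y| ^ b + E)) := by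
    gcongr
    exact (abs_sub_rpow_le_two_mul hb.le hb2 y e).trans (by gcongr)
  have hincr := abs_add_rpow_le hb hb2 x (c * (y - e))
  rw [abs_mul c, Real.mul_rpow (abs_nonneg _) (abs_nonneg _)] at hincr
  linarith [mul_le_mul_of_nonneg_left (le_abs_self E) hc]

variable {Ω : Type*} {m0 : MeasurableSpace Ω} {μ : Measure Ω}

lemma measurable_abs_rpow {m : MeasurableSpace Ω} {f : Ω → ℝ} (hf : Measurable[m] f) (b : ℝ) :
    Measurable[m] fun ω => |f ω| ^ b :=
  (by fun_prop : Measurable fun x : ℝ => |x| ^ b).comp hf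

lemma integrable_of_integrable_abs_rpow [IsFiniteMeasure μ] {f : Ω → ℝ} {b : ℝ} (hb : 1 ≤ b)
    (hf : AEStronglyMeasurable f μ) (hfb : Integrable (fun ω => |f ω| ^ b) μ) :
    Integrable f μ :=
  ((integrable_const 1).add hfb).mono' hf (.of_forall fun ω => abs_le_one_add_abs_rpow hb (f ω))

lemma ae_exists_tendsto_sum_of_lyapunov [IsProbabilityMeasure μ] {F : Filtration ℕ m0}
    {X V Y B : ℕ → Ω → ℝ} (hX : ∀ k, IsLocalMDiff μ (F k) (X k))
    (hXm : ∀ k, Measurable[F (k + 1)] (X k)) (hY : ∀ k, IsLocalMDiff μ (F k) (Y k))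
    (hYm : ∀ k, Measurable[F (k + 1)] (Y k)) (hV0 : Measurable[F 0] (V 0))
    (hBm : ∀ k, Measurable[F k] (B k)) (hV : ∀ k ω, 0 ≤ V k ω) (hB : ∀ k ω, 0 ≤ B k ω)
    (hXV : ∀ n ω, |∑ k ∈ range n, X k ω| ≤ 1 + V n ω)
    (hstep : ∀ᵐ ω ∂μ, ∀ k, V (k + 1) ω ≤ V k ω + Y k ω + B k ω)
    (hBsum : ∀ᵐ ω ∂μ, Summable fun k => B k ω) :
    ∀ᵐ ω ∂μ, ∃ l, Tendsto (fun n => ∑ k ∈ range n, X k ω) atTop (𝓝 l) := by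
  have hconvY := robbins_siegmund (C := 0) hY hYm hV0 hBm (.of_forall fun ω k => hV k ω) hB
    (fun _ _ => le_rfl) (by simpa only [Pi.zero_apply, add_zero] using hstep) hBsum
  have hconvYX := robbins_siegmund (V := fun k ω => 1 + V k ω + ∑ i ∈ range k, X i ω) (C := 0)
    (fun k => (hY k).add (F.le k) (hX k)) (fun k => (hYm k).add (hXm k))
    (by simpa only [sum_range_zero, add_zero] using hV0.const_add 1) hBm
    (.of_forall fun ω k => by linarith [neg_le_of_abs_le (hXV k ω)]) hB (fun _ _ => le_rfl)
    (by
      filter_upwards [hstep] with ω h k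
      simp only [sum_range_succ, Pi.zero_apply]
      linarith [h k]) hBsum
  filter_upwards [hconvY, hconvYX] with ω ⟨⟨l₁, h₁⟩, _⟩ ⟨⟨l₂, h₂⟩, _⟩
  refine ⟨l₂ - l₁, (h₂.sub h₁).congr fun n => ?_⟩
  rw [sum_add_distrib, add_sub_cancel_left]

/-- **Chow's theorem** on the convergence of martingale transforms, for moments of order
`b ∈ (1, 2]`. -/
theorem chow_convergence [IsProbabilityMeasure μ] {F : Filtration ℕ m0} {η c : ℕ → Ω → ℝ} {b : ℝ}
    (hb : 1 < b) (hb2 : b ≤ 2) (hη : ∀ k, Measurable[F (k + 1)] (η k))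
    (hηb : ∀ k, Integrable (fun ω => |η k ω| ^ b) μ) (hc : ∀ k, Measurable[F k] (c k))
    (hsum : ∀ᵐ ω ∂μ, Summable fun k => |c k ω| ^ b * |(μ[fun ω => |η k ω| ^ b | F k]) ω|) :
    ∀ᵐ ω ∂μ, ∃ l, Tendsto (fun n => ∑ k ∈ range n, c k ω * (η k ω - (μ[η k | F k]) ω))
      atTop (𝓝 l) := by
  set E : ℕ → Ω → ℝ := fun k => μ[fun ω => |η k ω| ^ b | F k]
  set S : ℕ → Ω → ℝ := fun n ω => ∑ k ∈ range n, c k ω * (η k ω - (μ[η k | F k]) ω)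
  have hup {k : ℕ} {f : Ω → ℝ} (hf : Measurable[F k] f) : Measurable[F (k + 1)] f :=
    hf.mono (F.mono k.le_succ) le_rfl
  have hEm (k : ℕ) : Measurable[F k] (E k) := stronglyMeasurable_condExp.measurable
  have hξm (k : ℕ) : Measurable[F (k + 1)] fun ω => η k ω - (μ[η k | F k]) ω :=
    (hη k).sub (hup stronglyMeasurable_condExp.measurable)
  have hSm (n : ℕ) : Measurable[F n] (S n) := Finset.measurable_fun_sum _ fun k hk =>
    ((hup (hc k)).mul (hξm k)).mono (F.mono (mem_range.1 hk)) le_rfl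
  have hψm (k : ℕ) : Measurable[F k] fun ω => b * (S k ω * |S k ω| ^ (b - 2)) * c k ω :=
    (((hSm k).mul (measurable_abs_rpow (hSm k) _)).const_mul b).mul (hc k)
  have hξ (k : ℕ) : IsLocalMDiff μ (F k) fun ω => η k ω - (μ[η k | F k]) ω :=
    isLocalMDiff_sub_of_condExp_ae_eq (F.le k) (integrable_of_integrable_abs_rpow hb.le
      ((hη k).mono (F.le _) le_rfl).aestronglyMeasurable (hηb k)) .rfl
  have hY (k : ℕ) : IsLocalMDiff μ (F k) fun ω =>
      b * (S k ω * |S k ω| ^ (b - 2)) * c k ω * (η k ω - (μ[η k | F k]) ω) +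
        26 * |c k ω| ^ b * (|η k ω| ^ b - E k ω) :=
    ((hξ k).mul_left (F.le k) (hψm k)).add (F.le k) ((isLocalMDiff_sub_of_condExp_ae_eq (F.le k)
      (hηb k) .rfl).mul_left (F.le k) ((measurable_abs_rpow (hc k) b).const_mul 26))
  have hYm (k : ℕ) : Measurable[F (k + 1)] fun ω =>
      b * (S k ω * |S k ω| ^ (b - 2)) * c k ω * (η k ω - (μ[η k | F k]) ω) +
        26 * |c k ω| ^ b * (|η k ω| ^ b - E k ω) :=
    ((hup (hψm k)).mul (hξm k)).add ((hup ((measurable_abs_rpow (hc k) b).const_mul 26)).mul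
      ((measurable_abs_rpow (hη k) b).sub (hup (hEm k))))
  have hBm (k : ℕ) : Measurable[F k] fun ω => 52 * (|c k ω| ^ b * |E k ω|) :=
    ((measurable_abs_rpow (hc k) b).mul (measurable_abs.comp (hEm k))).const_mul 52
  have hjensen (k : ℕ) : ∀ᵐ ω ∂μ, |(μ[η k | F k]) ω| ^ b ≤ E k ω :=
    Integrable.norm_condExp_rpow_le (f := η k) hb.le (hηb k)
  refine ae_exists_tendsto_sum_of_lyapunov (fun k => (hξ k).mul_left (F.le k) (hc k))
    (fun k => (hup (hc k)).mul (hξm k)) hY hYm (measurable_abs_rpow (hSm 0) b) hBm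
    (fun k ω => by positivity) (fun k ω => by positivity)
    (fun n ω => abs_le_one_add_abs_rpow hb.le _) ?_
    (by filter_upwards [hsum] with ω h using h.mul_left 52)
  filter_upwards [ae_all_iff.2 hjensen] with ω hJ k
  rw [sum_range_succ]
  exact abs_add_mul_sub_rpow_le hb hb2 (hJ k)

end Chow

section Kronecker

open Asymptotics

lemma isLittleO_sum_range_of_isBigO {f u N : ℕ → ℝ} (hu : ∀ k, 0 ≤ u k)
    (hN : Tendsto N atTop atTop) (hf : f =o[atTop] u)
    (huN : (fun n => ∑ k ∈ range n, u k) =O[atTop] N) :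
    (fun n => ∑ k ∈ range n, f k) =o[atTop] N := by
  by_cases hsum : Summable u
  · have hconst : (fun _ => (1 : ℝ)) =o[atTop] N :=
      isLittleO_const_left.2 (.inr (tendsto_norm_atTop_atTop.comp hN))
    have hf_sum : Summable f := summable_of_isBigO_nat hsum hf.isBigO
    exact (hf_sum.hasSum.tendsto_sum_nat.isBigO_one ℝ).trans_isLittleO hconst
  · exact (hf.sum_range hu ((not_summable_iff_tendsto_nat_atTop_of_nonneg hu).1 hsum)).trans_isBigO
      huN

lemma isLittleO_sum_range_of_isLittleO {f u N : ℕ → ℝ} (hu : ∀ k, 0 ≤ u k)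
    (hN : Tendsto N atTop atTop) (hf : f =O[atTop] u)
    (huN : (fun n => ∑ k ∈ range n, u k) =o[atTop] N) :
    (fun n => ∑ k ∈ range n, f k) =o[atTop] N := by
  obtain ⟨C, hC, hbound⟩ := hf.exists_pos
  obtain ⟨m, hm⟩ := eventually_atTop.1 hbound.bound
  have hconst : (fun _ => ∑ k ∈ range m, |f k|) =o[atTop] N :=
    isLittleO_const_left.2 (.inr (tendsto_norm_atTop_atTop.comp hN))
  have hle (k : ℕ) : |f k| ≤ (if k < m then |f k| else 0) + C * u k := by
    split_ifs with hk
    · exact le_add_of_nonneg_right (mul_nonneg hC.le (hu k))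
    · simpa only [zero_add, Real.norm_eq_abs, abs_of_nonneg (hu k)] using hm k (not_lt.1 hk)
  refine (IsBigO.of_norm_le fun n => ?_).trans_isLittleO (hconst.add (huN.const_mul_left C))
  calc |∑ k ∈ range n, f k| ≤ ∑ k ∈ range n, ((if k < m then |f k| else 0) + C * u k) :=
        (abs_sum_le_sum_abs _ _).trans (sum_le_sum fun k _ => hle k)
    _ = ∑ k ∈ range n with k < m, |f k| + C * ∑ k ∈ range n, u k := by
        rw [sum_add_distrib, sum_filter, mul_sum]
    _ ≤ ∑ k ∈ range m, |f k| + C * ∑ k ∈ range n, u k := by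
        gcongr 1
        exact sum_le_sum_of_subset_of_nonneg (f := fun k => |f k|)
          (fun k hk => mem_range.2 (mem_filter.1 hk).2) fun k _ _ => abs_nonneg _

lemma sum_range_eq_abel {N y : ℕ → ℝ} (hN : ∀ k, 0 < N k) (l : ℝ) (n : ℕ) :
    ∑ k ∈ range n, y k = N n * (∑ k ∈ range n, (N (k + 1))⁻¹ * y k - l) + N 0 * l -
      ∑ k ∈ range n, (N (k + 1) - N k) * (∑ i ∈ range k, (N (i + 1))⁻¹ * y i - l) := by
  induction n with
  | zero => simp
  | succ n ih =>
    rw [sum_range_succ, ih, sum_range_succ _ n, sum_range_succ _ n]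
    linear_combination -y n * mul_inv_cancel₀ (hN (n + 1)).ne'

/-- **Kronecker's lemma**. -/
theorem kronecker {N y : ℕ → ℝ} (hN : Monotone N) (hpos : ∀ k, 0 < N k)
    (hNt : Tendsto N atTop atTop) {l : ℝ}
    (hl : Tendsto (fun n => ∑ k ∈ range n, (N (k + 1))⁻¹ * y k) atTop (𝓝 l)) :
    (fun n => ∑ k ∈ range n, y k) =o[atTop] N := by
  have hsub : (fun n => ∑ k ∈ range n, (N (k + 1))⁻¹ * y k - l) =o[atTop] fun _ => (1 : ℝ) :=
    (isLittleO_one_iff ℝ).2 (by simpa only [sub_self] using hl.sub_const l)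
  have hconst : (fun _ : ℕ => N 0 * l) =o[atTop] N :=
    isLittleO_const_left.2 (.inr (tendsto_norm_atTop_atTop.comp hNt))
  have htele : (fun n => ∑ k ∈ range n, (N (k + 1) - N k)) =O[atTop] N := by
    simp only [sum_range_sub]
    exact (isBigO_refl N atTop).sub
      (isLittleO_const_left.2 (.inr (tendsto_norm_atTop_atTop.comp hNt))).isBigO
  rw [funext (sum_range_eq_abel hpos l)]
  refine (IsLittleO.add ?_ hconst).sub (isLittleO_sum_range_of_isBigO
    (fun k => sub_nonneg.2 (hN k.le_succ)) hNt ?_ htele)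
  · simpa only [mul_one] using (isBigO_refl N atTop).mul_isLittleO hsub
  · simpa only [mul_one] using
      (isBigO_refl (fun k => N (k + 1) - N k) atTop).mul_isLittleO hsub

end Kronecker

section Noise

open Asymptotics

variable {Ω : Type*} {m0 : MeasurableSpace Ω} {μ : Measure Ω} {F : Filtration ℕ m0}
  {c e N : ℕ → Ω → ℝ} {σ a b : ℝ}

/-- The innovations `e k = ε (k + 1)` of the paper: martingale differences with conditional
variance `σ ^ 2` and almost surely bounded conditional moments of order `a`. -/
structure IsNoise (μ : Measure Ω) (F : Filtration ℕ m0) (e : ℕ → Ω → ℝ) (σ a : ℝ) : Prop where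
  measurable : ∀ k, Measurable[F (k + 1)] (e k)
  condExp_eq_zero : ∀ k, μ[e k | F k] =ᵐ[μ] 0
  condExp_sq : ∀ k, μ[fun ω => e k ω ^ 2 | F k] =ᵐ[μ] fun _ => σ ^ 2
  integrable_moment : ∀ k, Integrable (fun ω => |e k ω| ^ a) μ
  condExp_moment_le : ∀ᵐ ω ∂μ, ∃ C : ℝ, ∀ k, (μ[fun ω => |e k ω| ^ a | F k]) ω ≤ C

/-- A predictable normalization of sums: `N (k + 1)` is known at time `k`, and `N` increases to
infinity from a value at least `1`. -/
structure IsClock (μ : Measure Ω) (F : Filtration ℕ m0) (N : ℕ → Ω → ℝ) : Prop where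
  measurable : ∀ k, Measurable[F k] (N (k + 1))
  monotone : ∀ ω, Monotone fun k => N k ω
  one_le : ∀ k ω, 1 ≤ N k ω
  tendsto : ∀ᵐ ω ∂μ, Tendsto (fun k => N k ω) atTop atTop

lemma rpow_le_one_add_rpow {x s t : ℝ} (hx : 0 ≤ x) (hs : 0 ≤ s) (hst : s ≤ t) :
    x ^ s ≤ 1 + x ^ t := by
  rcases le_total x 1 with h | h
  · linarith [Real.rpow_le_one hx h hs, Real.rpow_nonneg hx t]
  · linarith [Real.rpow_le_rpow_of_exponent_le h hst]

lemma IsNoise.integrable_abs_rpow [IsFiniteMeasure μ] (H : IsNoise μ F e σ a) {s : ℝ}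
    (hs : 0 ≤ s) (hsa : s ≤ a) (k : ℕ) : Integrable (fun ω => |e k ω| ^ s) μ := by
  refine ((integrable_const (1 : ℝ)).add (H.integrable_moment k)).mono'
    ((measurable_abs_rpow (H.measurable k) s).mono (F.le _) le_rfl).aestronglyMeasurable
    (.of_forall fun ω => ?_)
  rw [Real.norm_of_nonneg (by positivity)]
  exact rpow_le_one_add_rpow (abs_nonneg _) hs hsa

lemma IsNoise.integrable [IsFiniteMeasure μ] (H : IsNoise μ F e σ a) (ha : 1 ≤ a) (k : ℕ) :
    Integrable (e k) μ :=
  integrable_of_integrable_abs_rpow ha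
    ((H.measurable k).mono (F.le _) le_rfl).aestronglyMeasurable (H.integrable_moment k)

lemma IsNoise.abs_condExp_abs_rpow_le [IsFiniteMeasure μ] (H : IsNoise μ F e σ a) {s : ℝ}
    (hs : 0 ≤ s) (hsa : s ≤ a) :
    ∀ᵐ ω ∂μ, ∃ C, ∀ k, |(μ[fun ω => |e k ω| ^ s | F k]) ω| ≤ C := by
  have hnonneg (k : ℕ) : 0 ≤ᵐ[μ] μ[fun ω => |e k ω| ^ s | F k] :=
    condExp_nonneg (.of_forall fun ω => by positivity)
  have hle (k : ℕ) : ∀ᵐ ω ∂μ, (μ[fun ω => |e k ω| ^ s | F k]) ω ≤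
      1 + (μ[fun ω => |e k ω| ^ a | F k]) ω := by
    have hmono : μ[fun ω => |e k ω| ^ s | F k] ≤ᵐ[μ]
        μ[(fun _ => (1 : ℝ)) + fun ω => |e k ω| ^ a | F k] :=
      condExp_mono (H.integrable_abs_rpow hs hsa k)
        ((integrable_const 1).add (H.integrable_moment k))
        (.of_forall fun ω => rpow_le_one_add_rpow (abs_nonneg _) hs hsa)
    filter_upwards [hmono, condExp_add (integrable_const 1) (H.integrable_moment k) (F k)]
      with ω hω hadd
    rwa [hadd, Pi.add_apply, condExp_const (F.le k)] at hω
  filter_upwards [ae_all_iff.2 hnonneg, ae_all_iff.2 hle, H.condExp_moment_le] with ω h0 hle ⟨C, hC⟩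
  exact ⟨1 + C, fun k => by
    rw [abs_of_nonneg (h0 k)]
    linarith [hle k, hC k]⟩

lemma chow_strong_law [IsProbabilityMeasure μ] {η : ℕ → Ω → ℝ} (hb : 1 < b) (hb2 : b ≤ 2)
    (hη : ∀ k, Measurable[F (k + 1)] (η k)) (hηb : ∀ k, Integrable (fun ω => |η k ω| ^ b) μ)
    (hbdd : ∀ᵐ ω ∂μ, ∃ C, ∀ k, |(μ[fun ω => |η k ω| ^ b | F k]) ω| ≤ C)
    (hN : IsClock μ F N) (hc : ∀ k, Measurable[F k] (c k))
    (hsum : ∀ᵐ ω ∂μ, Summable fun k => (|c k ω| / N (k + 1) ω) ^ b) :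
    ∀ᵐ ω ∂μ, (fun n => ∑ k ∈ range n, c k ω * (η k ω - (μ[η k | F k]) ω))
      =o[atTop] fun n => N n ω := by
  have hpos (k : ℕ) (ω : Ω) : 0 < N k ω := one_pos.trans_le (hN.one_le k ω)
  have hconv := chow_convergence (c := fun k ω => (N (k + 1) ω)⁻¹ * c k ω) hb hb2 hη hηb
    (fun k => (hN.measurable k).inv.mul (hc k)) (by
      filter_upwards [hsum, hbdd] with ω h ⟨C, hC⟩
      refine (h.mul_right C).of_nonneg_of_le (fun k => by positivity) fun k => ?_
      rw [abs_mul, abs_inv, abs_of_pos (hpos (k + 1) ω), ← div_eq_inv_mul]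
      have := (hpos (k + 1) ω).le
      gcongr
      exact hC k)
  filter_upwards [hconv, hN.tendsto] with ω ⟨l, hl⟩ htend
  exact kronecker (hN.monotone ω) (hpos · ω) htend (l := l) (by simpa only [mul_assoc] using hl)

lemma IsNoise.strong_law_abs_rpow [IsProbabilityMeasure μ] (H : IsNoise μ F e σ a) {s : ℝ}
    (hb : 1 < b) (hb2 : b ≤ 2) (hs : 0 ≤ s) (hsb : s * b ≤ a) (hN : IsClock μ F N)
    (hc : ∀ k, Measurable[F k] (c k))
    (hsum : ∀ᵐ ω ∂μ, Summable fun k => (|c k ω| / N (k + 1) ω) ^ b) :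
    ∀ᵐ ω ∂μ, (fun n => ∑ k ∈ range n, c k ω * (|e k ω| ^ s - (μ[fun ω => |e k ω| ^ s | F k]) ω))
      =o[atTop] fun n => N n ω := by
  have hpow (k : ℕ) (ω : Ω) : |(|e k ω| ^ s)| ^ b = |e k ω| ^ (s * b) := by
    rw [abs_of_nonneg (by positivity), Real.rpow_mul (abs_nonneg _)]
  refine chow_strong_law hb hb2 (fun k => measurable_abs_rpow (H.measurable k) s) ?_ ?_ hN hc hsum
  · simpa only [hpow] using H.integrable_abs_rpow (by positivity) hsb
  · simpa only [hpow] using H.abs_condExp_abs_rpow_le (by positivity) hsb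

lemma IsNoise.strong_law [IsProbabilityMeasure μ] (H : IsNoise μ F e σ a) (ha : 2 ≤ a)
    (hN : IsClock μ F N) (hc : ∀ k, Measurable[F k] (c k))
    (hsum : ∀ᵐ ω ∂μ, Summable fun k => (|c k ω| / N (k + 1) ω) ^ (2 : ℝ)) :
    ∀ᵐ ω ∂μ, (fun n => ∑ k ∈ range n, c k ω * e k ω) =o[atTop] fun n => N n ω := by
  filter_upwards [ae_all_iff.2 H.condExp_eq_zero, chow_strong_law one_lt_two le_rfl H.measurable
    (H.integrable_abs_rpow zero_le_two ha) (H.abs_condExp_abs_rpow_le zero_le_two ha) hN hc hsum]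
    with ω hzero h
  simpa only [hzero, Pi.zero_apply, sub_zero] using h

lemma IsNoise.strong_law_sq [IsProbabilityMeasure μ] (H : IsNoise μ F e σ a) (hb : 1 < b)
    (hb2 : b ≤ 2) (hba : 2 * b ≤ a) (hN : IsClock μ F N) (hc : ∀ k, Measurable[F k] (c k))
    (hsum : ∀ᵐ ω ∂μ, Summable fun k => (|c k ω| / N (k + 1) ω) ^ b) :
    ∀ᵐ ω ∂μ, (fun n => ∑ k ∈ range n, c k ω * (e k ω ^ 2 - σ ^ 2)) =o[atTop] fun n => N n ω := by
  filter_upwards [ae_all_iff.2 H.condExp_sq,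
    H.strong_law_abs_rpow hb hb2 zero_le_two hba hN hc hsum] with ω hvar h
  simpa only [Real.rpow_two, sq_abs, hvar] using h

end Noise

section PowerInequalities

variable {r : ℝ}

lemma one_add_pow_le_quadratic (p : ℕ) :
    ∃ C : ℝ, 0 ≤ C ∧ ∀ u : ℝ, -1 ≤ u → u ≤ 3 → (1 + u) ^ p ≤ 1 + p * u + C * u ^ 2 := by
  induction p with
  | zero => exact ⟨0, le_rfl, fun u _ _ => by simp⟩
  | succ p ih =>
    obtain ⟨C, hC, h⟩ := ih
    refine ⟨p + 4 * C, by positivity, fun u hu hu3 => ?_⟩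
    calc (1 + u) ^ (p + 1) = (1 + u) ^ p * (1 + u) := pow_succ ..
      _ ≤ (1 + p * u + C * u ^ 2) * (1 + u) := by gcongr <;> grind
      _ = 1 + (p + 1) * u + (p + 4 * C) * u ^ 2 - C * u ^ 2 * (3 - u) := by ring
      _ ≤ 1 + (p + 1 : ℕ) * u + (p + 4 * C) * u ^ 2 := by
        push_cast
        linarith [mul_nonneg (mul_nonneg hC (sq_nonneg u)) (sub_nonneg.2 hu3)]

lemma one_add_rpow_le_quadratic (hr : 0 ≤ r) :
    ∃ C : ℝ, 0 ≤ C ∧ ∀ u : ℝ, -1 ≤ u → u ≤ 3 → (1 + u) ^ r ≤ 1 + r * u + C * u ^ 2 := by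
  obtain ⟨p, s, hs0, hs1, rfl⟩ : ∃ (p : ℕ) (s : ℝ), 0 ≤ s ∧ s ≤ 1 ∧ r = p + s :=
    ⟨⌊r⌋₊, r - ⌊r⌋₊, sub_nonneg.2 (Nat.floor_le hr), by linarith [Nat.lt_floor_add_one r], by ring⟩
  obtain ⟨C, hC, h⟩ := one_add_pow_le_quadratic p
  refine ⟨p + 4 * C, by positivity, fun u hu hu3 => ?_⟩
  have hu0 : 0 ≤ 1 + u := by linarith
  have hsu0 : 0 ≤ 1 + s * u := by nlinarith
  have hsu4 : 1 + s * u ≤ 4 := by nlinarith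
  calc (1 + u) ^ (p + s) = (1 + u) ^ p * (1 + u) ^ s := by
        rw [Real.rpow_add_of_nonneg hu0 p.cast_nonneg hs0, Real.rpow_natCast]
    _ ≤ (1 + u) ^ p * (1 + s * u) := by
        gcongr
        exact rpow_one_add_le_one_add_mul_self hu hs0 hs1
    _ ≤ (1 + p * u + C * u ^ 2) * (1 + s * u) := by
        gcongr
        exact h u hu hu3
    _ = 1 + (p + s) * u + p * s * u ^ 2 + C * u ^ 2 * (1 + s * u) := by ring
    _ ≤ 1 + (p + s) * u + p * 1 * u ^ 2 + C * u ^ 2 * 4 := by gcongr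
    _ = 1 + (p + s) * u + (p + 4 * C) * u ^ 2 := by ring

lemma one_add_two_mul_add_rpow_le (hr : 1 ≤ r) :
    ∃ C : ℝ, 0 ≤ C ∧ ∀ t y : ℝ, t ^ 2 ≤ y →
      (1 + (2 * t + y)) ^ r ≤ 1 + 2 * r * t + C * (y + y ^ r) := by
  obtain ⟨C, hC, h⟩ := one_add_rpow_le_quadratic (zero_le_one.trans hr)
  refine ⟨r + 9 * C + 4 ^ r + 2 * r, by positivity, fun t y hty => ?_⟩
  have hy : 0 ≤ y := (sq_nonneg t).trans hty
  rcases le_total y 1 with hy1 | hy1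
  · have ht1 : t ≤ 1 := by nlinarith
    have hsq : (2 * t + y) ^ 2 ≤ 9 * y := by nlinarith
    calc (1 + (2 * t + y)) ^ r ≤ 1 + r * (2 * t + y) + C * (2 * t + y) ^ 2 :=
          h _ (by nlinarith [sq_nonneg (t + 1)]) (by linarith)
      _ ≤ 1 + r * (2 * t + y) + C * (9 * y) := by gcongr
      _ = 1 + 2 * r * t + (r + 9 * C) * y := by ring
      _ ≤ 1 + 2 * r * t + (r + 9 * C + 4 ^ r + 2 * r) * (y + y ^ r) := by
        have : 0 ≤ (4 ^ r + 2 * r) * y + (r + 9 * C + 4 ^ r + 2 * r) * y ^ r := by positivity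
        linarith
  · have ht : -y ≤ t := by nlinarith
    have hyyr : y ≤ y ^ r := Real.self_le_rpow_of_one_le hy1 hr
    calc (1 + (2 * t + y)) ^ r ≤ (4 * y) ^ r :=
          Real.rpow_le_rpow (by nlinarith [sq_nonneg (t + 1)]) (by nlinarith [sq_nonneg (t - 1)])
            (by linarith)
      _ = 1 + 2 * r * (-y) + (4 ^ r * y ^ r + 2 * r * y) - 1 := by
        rw [Real.mul_rpow (by norm_num) hy]; ring
      _ ≤ 1 + 2 * r * t + (4 ^ r * y ^ r + 2 * r * y ^ r) := by
        have : 2 * r * (-y) ≤ 2 * r * t := by gcongr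
        have : 2 * r * y ≤ 2 * r * y ^ r := by gcongr
        linarith
      _ ≤ 1 + 2 * r * t + (r + 9 * C + 4 ^ r + 2 * r) * (y + y ^ r) := by
        have : 0 ≤ (r + 9 * C + 4 ^ r + 2 * r) * y + (r + 9 * C) * y ^ r := by positivity
        linarith

lemma rpow_eq_rpow_sub_one_mul {x : ℝ} (hx : 0 ≤ x) (hr : r ≠ 0) : x ^ r = x ^ (r - 1) * x := by
  rcases hx.eq_or_lt with rfl | hx
  · rw [Real.zero_rpow hr, mul_zero]
  · rw [← Real.rpow_add_one hx.ne', sub_add_cancel]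

lemma quadratic_rpow_le_of_pos (hr : 1 ≤ r) :
    ∃ C : ℝ, 0 ≤ C ∧ ∀ A β γ e : ℝ, 0 < A → 0 ≤ γ → β ^ 2 ≤ A * γ →
      (A + 2 * e * β + e ^ 2 * γ) ^ r ≤ A ^ r + 2 * r * A ^ (r - 1) * β * e +
        C * (A ^ (r - 1) * γ * e ^ 2 + γ ^ r * (e ^ 2) ^ r) := by
  obtain ⟨C, hC, h⟩ := one_add_two_mul_add_rpow_le hr
  refine ⟨C, hC, fun A β γ e hA hγ hβ => ?_⟩
  set t := e * β / A with ht
  set y := e ^ 2 * γ / A with hy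
  have hty : t ^ 2 ≤ y := by
    rw [ht, hy, div_pow, mul_pow, div_le_div_iff₀ (by positivity) hA]
    nlinarith [mul_le_mul_of_nonneg_left hβ (mul_nonneg (sq_nonneg e) hA.le)]
  have hAt : A * t = e * β := mul_div_cancel₀ _ hA.ne'
  have hAy : A * y = e ^ 2 * γ := mul_div_cancel₀ _ hA.ne'
  have hAr : A ^ r = A ^ (r - 1) * A := rpow_eq_rpow_sub_one_mul hA.le (by linarith)
  have hAyr : A ^ r * y ^ r = γ ^ r * (e ^ 2) ^ r := by
    rw [← Real.mul_rpow hA.le ((sq_nonneg t).trans hty), hAy, mul_comm,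
      Real.mul_rpow hγ (sq_nonneg e)]
  calc (A + 2 * e * β + e ^ 2 * γ) ^ r = A ^ r * (1 + (2 * t + y)) ^ r := by
        rw [← Real.mul_rpow hA.le (by nlinarith [sq_nonneg (t + 1)]), mul_add, mul_add, mul_one,
          mul_left_comm, hAt, hAy, add_assoc, ← mul_assoc]
    _ ≤ A ^ r * (1 + 2 * r * t + C * (y + y ^ r)) := by
        gcongr
        exact h t y hty
    _ = A ^ r + 2 * r * (A ^ (r - 1) * (A * t)) +
        C * (A ^ (r - 1) * (A * y) + A ^ r * y ^ r) := by rw [hAr]; ring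
    _ = A ^ r + 2 * r * A ^ (r - 1) * β * e +
        C * (A ^ (r - 1) * γ * e ^ 2 + γ ^ r * (e ^ 2) ^ r) := by rw [hAt, hAy, hAyr]; ring

lemma quadratic_rpow_le (hr : 1 ≤ r) :
    ∃ C : ℝ, 0 ≤ C ∧ ∀ A β γ e : ℝ, 0 ≤ A → 0 ≤ γ → β ^ 2 ≤ A * γ →
      (A + 2 * e * β + e ^ 2 * γ) ^ r ≤ A ^ r + 2 * r * A ^ (r - 1) * β * e +
        C * (A ^ (r - 1) * γ * e ^ 2 + γ ^ r * |e| ^ (2 * r)) := by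
  obtain ⟨C, hC, h⟩ := quadratic_rpow_le_of_pos hr
  refine ⟨C + 1, by positivity, fun A β γ e hA hγ hβ => ?_⟩
  have hnn : 0 ≤ A ^ (r - 1) * γ * e ^ 2 + γ ^ r * (e ^ 2) ^ r := by positivity
  rw [Real.rpow_mul (abs_nonneg _), Real.rpow_two, sq_abs]
  rcases hA.eq_or_lt with rfl | hA0
  · obtain rfl : β = 0 := by nlinarith
    have : 0 ≤ (0 : ℝ) ^ (r - 1) * γ * e ^ 2 := by positivity
    rw [mul_zero, zero_add, zero_add, Real.mul_rpow (sq_nonneg _) hγ,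
      Real.zero_rpow (by linarith : r ≠ 0)]
    linarith [mul_nonneg hC hnn]
  · exact (h A β γ e hA0 hγ hβ).trans (by gcongr; linarith)

lemma exists_mul_rpow_sub_one_le {c δ : ℝ} (hr : 1 ≤ r) (hc : 0 ≤ c) (hδ : 0 < δ) :
    ∃ K, 0 ≤ K ∧ ∀ A : ℝ, 0 ≤ A → c * A ^ (r - 1) ≤ A ^ r / δ + K := by
  refine ⟨c * (δ * c) ^ (r - 1), by positivity, fun A hA => ?_⟩
  rcases le_total A (δ * c) with h | h
  · have : c * A ^ (r - 1) ≤ c * (δ * c) ^ (r - 1) := by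
      gcongr
    exact this.trans (le_add_of_nonneg_left (by positivity))
  · have : c * A ^ (r - 1) ≤ A ^ r / δ := by
      rw [le_div_iff₀ hδ, rpow_eq_rpow_sub_one_mul (r := r) hA (by linarith)]
      nlinarith [mul_le_mul_of_nonneg_left h (Real.rpow_nonneg hA (r - 1))]
    exact this.trans (le_add_of_nonneg_right (by positivity))

lemma sub_mul_rpow_neg_le {κ x y : ℝ} (hκ : 1 < κ) (hx : 0 < x) (hxy : x ≤ y) :
    (y - x) * y ^ (-κ) ≤ x ^ (1 - κ) / (κ - 1) - y ^ (1 - κ) / (κ - 1) := by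
  have hy : 0 < y := hx.trans_le hxy
  have hρ : 0 < x / y := by positivity
  have hbernoulli : 1 + (κ - 1) * (1 - x / y) ≤ (x / y) ^ (1 - κ) := by
    rw [Real.rpow_def_of_pos hρ]
    nlinarith [Real.add_one_le_exp (Real.log (x / y) * (1 - κ)), Real.log_le_sub_one_of_pos hρ]
  have hx' : x ^ (1 - κ) = (x / y) ^ (1 - κ) * y ^ (1 - κ) := by
    rw [← Real.mul_rpow hρ.le hy.le, div_mul_cancel₀ _ hy.ne']
  have hy' : y ^ (-κ) = y ^ (1 - κ) / y := by
    rw [← Real.rpow_sub_one hy.ne', sub_sub_cancel_left]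
  rw [← sub_div, le_div_iff₀ (by linarith), hx', hy']
  calc (y - x) * (y ^ (1 - κ) / y) * (κ - 1)
      = (1 + (κ - 1) * (1 - x / y)) * y ^ (1 - κ) - y ^ (1 - κ) := by field_simp; ring
    _ ≤ (x / y) ^ (1 - κ) * y ^ (1 - κ) - y ^ (1 - κ) := by gcongr

lemma summable_sub_mul_rpow_neg {N : ℕ → ℝ} {κ : ℝ} (hκ : 1 < κ) (hN : Monotone N)
    (hpos : ∀ k, 0 < N k) : Summable fun k => (N (k + 1) - N k) * N (k + 1) ^ (-κ) := by
  refine summable_of_sum_range_le (c := N 0 ^ (1 - κ) / (κ - 1)) (fun k => ?_) fun n => ?_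
  · exact mul_nonneg (sub_nonneg.2 (hN k.le_succ)) (Real.rpow_nonneg (hpos _).le _)
  · calc ∑ k ∈ range n, (N (k + 1) - N k) * N (k + 1) ^ (-κ)
        ≤ ∑ k ∈ range n, (N k ^ (1 - κ) / (κ - 1) - N (k + 1) ^ (1 - κ) / (κ - 1)) :=
          sum_le_sum fun k _ => sub_mul_rpow_neg_le hκ (hpos k) (hN k.le_succ)
      _ = N 0 ^ (1 - κ) / (κ - 1) - N n ^ (1 - κ) / (κ - 1) := sum_range_sub' _ _
      _ ≤ N 0 ^ (1 - κ) / (κ - 1) :=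
        sub_le_self _ (div_nonneg (Real.rpow_nonneg (hpos n).le _) (by linarith))

end PowerInequalities

section ModelSystem

variable {Ω : Type*} {m0 : MeasurableSpace Ω} {μ : Measure Ω} {F : Filtration ℕ m0}
  {e T V A β γ : ℕ → Ω → ℝ} {σ a r κ δ : ℝ}

lemma rpow_mul_one_add_le (hr : 1 ≤ r) {x t y : ℝ} (hx : 0 ≤ x) (ht : 0 ≤ t)
    (hxy : x * (1 + t) ≤ y) : x ^ r * (1 + t) ≤ y ^ r :=
  calc x ^ r * (1 + t) ≤ x ^ r * (1 + t) ^ r := by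
        gcongr
        exact Real.self_le_rpow_of_one_le (by linarith) hr
    _ = (x * (1 + t)) ^ r := (Real.mul_rpow hx (by linarith)).symm
    _ ≤ y ^ r := Real.rpow_le_rpow (by positivity) hxy (by linarith)

lemma lyapunov_step (hr : 1 ≤ r) (hδ : 0 < δ) (σ : ℝ) : ∃ C K : ℝ, 0 ≤ C ∧ 0 ≤ K ∧
    ∀ V A β γ e E : ℝ, 0 ≤ A → 0 ≤ γ → γ ≤ δ → β ^ 2 ≤ A * γ → A * (1 + γ / δ) ≤ V →
      (A + 2 * e * β + e ^ 2 * γ) ^ r + γ * A ^ r / (2 * δ) ≤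
        V ^ r + (2 * r * A ^ (r - 1) * β * e + C * A ^ (r - 1) * γ * (e ^ 2 - σ ^ 2) +
          C * γ ^ r * (|e| ^ (2 * r) - E)) + γ * (K + C * δ ^ (r - 1) * |E|) := by
  obtain ⟨C, hC, hquad⟩ := quadratic_rpow_le hr
  obtain ⟨K, hK, habsorb⟩ := exists_mul_rpow_sub_one_le (c := C * σ ^ 2) (δ := 2 * δ) hr
    (by positivity) (by positivity)
  refine ⟨C, K, hC, hK, fun V A β γ e E hA hγ hγδ hβ hV => ?_⟩
  have hdrift : A ^ r * (1 + γ / δ) ≤ V ^ r := rpow_mul_one_add_le hr hA (by positivity) hV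
  have hdrift_eq : A ^ r * (1 + γ / δ) = A ^ r + 2 * (γ * A ^ r / (2 * δ)) := by field_simp
  have hvar : γ * (C * σ ^ 2 * A ^ (r - 1)) ≤ γ * (A ^ r / (2 * δ) + K) :=
    mul_le_mul_of_nonneg_left (habsorb A hA) hγ
  have hmoment : C * (γ ^ r * E) ≤ C * (γ * δ ^ (r - 1) * |E|) := by
    have hγr : γ ^ r ≤ γ * δ ^ (r - 1) := by
      rw [rpow_eq_rpow_sub_one_mul (r := r) hγ (by linarith), mul_comm]
      have := sub_nonneg.2 hr
      gcongr
    calc C * (γ ^ r * E) ≤ C * (γ ^ r * |E|) := by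
          gcongr
          exact le_abs_self E
      _ ≤ C * (γ * δ ^ (r - 1) * |E|) := by gcongr
  rw [hdrift_eq] at hdrift
  linear_combination hquad A β γ e hA hγ hβ + hdrift + hvar + hmoment

namespace IsNoise

lemma isLocalMDiff [IsFiniteMeasure μ] (H : IsNoise μ F e σ a) (ha : 1 ≤ a) (k : ℕ) :
    IsLocalMDiff μ (F k) (e k) := by
  simpa only [Pi.zero_apply, sub_zero] using
    isLocalMDiff_sub_of_condExp_ae_eq (F.le k) (H.integrable ha k) (H.condExp_eq_zero k)

lemma isLocalMDiff_sq [IsFiniteMeasure μ] (H : IsNoise μ F e σ a) (ha : 2 ≤ a) (k : ℕ) :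
    IsLocalMDiff μ (F k) fun ω => e k ω ^ 2 - σ ^ 2 :=
  isLocalMDiff_sub_of_condExp_ae_eq (F.le k)
    (by simpa only [Real.rpow_two, sq_abs] using H.integrable_abs_rpow zero_le_two ha k)
    (H.condExp_sq k)

lemma isLocalMDiff_abs_rpow [IsFiniteMeasure μ] (H : IsNoise μ F e σ a) {s : ℝ} (hs : 0 ≤ s)
    (hsa : s ≤ a) (k : ℕ) :
    IsLocalMDiff μ (F k) fun ω => |e k ω| ^ s - (μ[fun ω => |e k ω| ^ s | F k]) ω :=
  isLocalMDiff_sub_of_condExp_ae_eq (F.le k) (H.integrable_abs_rpow hs hsa k) .rfl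

lemma isLocalMDiff_comb [IsFiniteMeasure μ] (H : IsNoise μ F e σ a) (ha : 2 ≤ a) {s : ℝ}
    (hs : 0 ≤ s) (hsa : s ≤ a) {k : ℕ} {w c₁ c₂ c₃ : Ω → ℝ} (hw : Measurable[F k] w)
    (h₁ : Measurable[F k] c₁) (h₂ : Measurable[F k] c₂) (h₃ : Measurable[F k] c₃) :
    IsLocalMDiff μ (F k) fun ω => w ω * (c₁ ω * e k ω + c₂ ω * (e k ω ^ 2 - σ ^ 2) +
      c₃ ω * (|e k ω| ^ s - (μ[fun ω => |e k ω| ^ s | F k]) ω)) :=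
  .mul_left (F.le k) hw <| .add (F.le k)
    (.add (F.le k) ((H.isLocalMDiff (one_le_two.trans ha) k).mul_left (F.le k) h₁)
      ((H.isLocalMDiff_sq ha k).mul_left (F.le k) h₂))
    ((H.isLocalMDiff_abs_rpow hs hsa k).mul_left (F.le k) h₃)

lemma measurable_comb (H : IsNoise μ F e σ a) (s : ℝ) {k : ℕ} {w c₁ c₂ c₃ : Ω → ℝ}
    (hw : Measurable[F k] w) (h₁ : Measurable[F k] c₁) (h₂ : Measurable[F k] c₂)
    (h₃ : Measurable[F k] c₃) :
    Measurable[F (k + 1)] fun ω => w ω * (c₁ ω * e k ω + c₂ ω * (e k ω ^ 2 - σ ^ 2) +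
      c₃ ω * (|e k ω| ^ s - (μ[fun ω => |e k ω| ^ s | F k]) ω)) := by
  have hup {f : Ω → ℝ} (hf : Measurable[F k] f) : Measurable[F (k + 1)] f :=
    hf.mono (F.mono k.le_succ) le_rfl
  have hE : Measurable[F k] (μ[fun ω => |e k ω| ^ s | F k]) :=
    stronglyMeasurable_condExp.measurable
  exact (hup hw).mul ((((hup h₁).mul (H.measurable k)).add
    ((hup h₂).mul (((H.measurable k).pow_const 2).sub_const (σ ^ 2)))).add
    ((hup h₃).mul ((measurable_abs_rpow (H.measurable k) s).sub (hup hE))))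

end IsNoise

/-- The logarithmic clock attached to a scalar process `T` started at `1`. -/
def logClock (T : ℕ → Ω → ℝ) (k : ℕ) (ω : Ω) : ℝ := 1 + Real.log (T k ω)

/-- The scalar recursion satisfied by `V k = M_kᵗ L⁻¹ M_k / T k`, `A k = M_kᵗ L⁻¹ M_k / T (k + 1)`,
`β k = Φ_kᵗ L⁻¹ M_k / T (k + 1)` and `γ k = Φ_kᵗ L⁻¹ Φ_k / T (k + 1)`, where `T` is a predictable
scalar clock such that `S_{k-1}` is asymptotic to `T k • L`, and `δ` is the dimension. -/
structure IsModelSystem (F : Filtration ℕ m0) (e T V A β γ : ℕ → Ω → ℝ) (δ : ℝ) : Prop where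
  δ_pos : 0 < δ
  T_zero : ∀ ω, T 0 ω = 1
  T_mono : ∀ ω, Monotone fun k => T k ω
  measurable_T_succ : ∀ k, Measurable[F k] (T (k + 1))
  measurable_A : ∀ k, Measurable[F k] (A k)
  measurable_β : ∀ k, Measurable[F k] (β k)
  A_nonneg : ∀ k ω, 0 ≤ A k ω
  sq_β_le : ∀ k ω, β k ω ^ 2 ≤ A k ω * γ k ω
  γ_eq : ∀ k ω, γ k ω = δ * (1 - T k ω / T (k + 1) ω)
  V_succ : ∀ k ω, V (k + 1) ω = A k ω + 2 * e k ω * β k ω + e k ω ^ 2 * γ k ω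
  V_mul_T : ∀ k ω, V k ω * T k ω = A k ω * T (k + 1) ω

namespace IsModelSystem

lemma one_le_T (H : IsModelSystem F e T V A β γ δ) (k : ℕ) (ω : Ω) : 1 ≤ T k ω :=
  (H.T_zero ω).ge.trans (H.T_mono ω k.zero_le)

lemma T_pos (H : IsModelSystem F e T V A β γ δ) (k : ℕ) (ω : Ω) : 0 < T k ω :=
  one_pos.trans_le (H.one_le_T k ω)

lemma one_le_logClock (H : IsModelSystem F e T V A β γ δ) (k : ℕ) (ω : Ω) :
    1 ≤ logClock T k ω :=
  le_add_of_nonneg_right (Real.log_nonneg (H.one_le_T k ω))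

lemma logClock_mono (H : IsModelSystem F e T V A β γ δ) (ω : Ω) :
    Monotone fun k => logClock T k ω :=
  fun _ _ hij => add_le_add_right (Real.log_le_log (H.T_pos _ ω) (H.T_mono ω hij)) 1

lemma measurable_logClock_succ (H : IsModelSystem F e T V A β γ δ) (k : ℕ) :
    Measurable[F k] (logClock T (k + 1)) :=
  (Real.measurable_log.comp (H.measurable_T_succ k)).const_add 1

lemma isClock (H : IsModelSystem F e T V A β γ δ)
    (hT : ∀ᵐ ω ∂μ, Tendsto (fun k => T k ω) atTop atTop) : IsClock μ F (logClock T) where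
  measurable := H.measurable_logClock_succ
  monotone := H.logClock_mono
  one_le := H.one_le_logClock
  tendsto := hT.mono fun _ h => tendsto_atTop_add_const_left _ 1 (Real.tendsto_log_atTop.comp h)

lemma measurable_T (H : IsModelSystem F e T V A β γ δ) (k : ℕ) : Measurable[F k] (T k) := by
  cases k with
  | zero => rw [funext H.T_zero]; exact measurable_const
  | succ k => exact (H.measurable_T_succ k).mono (F.mono k.le_succ) le_rfl

lemma measurable_γ (H : IsModelSystem F e T V A β γ δ) (k : ℕ) : Measurable[F k] (γ k) := by
  have h : Measurable[F k] fun ω => δ * (1 - T k ω / T (k + 1) ω) :=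
    (((H.measurable_T k).div (H.measurable_T_succ k)).const_sub 1).const_mul δ
  rwa [← funext (H.γ_eq k)] at h

lemma V_eq (H : IsModelSystem F e T V A β γ δ) (k : ℕ) (ω : Ω) :
    V k ω = A k ω * (T (k + 1) ω / T k ω) := by
  rw [← mul_div_assoc, ← H.V_mul_T, mul_div_cancel_right₀ _ (H.T_pos k ω).ne']

lemma measurable_V (H : IsModelSystem F e T V A β γ δ) (k : ℕ) : Measurable[F k] (V k) := by
  have h : Measurable[F k] fun ω => A k ω * (T (k + 1) ω / T k ω) :=
    (H.measurable_A k).mul ((H.measurable_T_succ k).div (H.measurable_T k))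
  rwa [← funext (H.V_eq k)] at h

lemma γ_nonneg (H : IsModelSystem F e T V A β γ δ) (k : ℕ) (ω : Ω) : 0 ≤ γ k ω := by
  rw [H.γ_eq]
  exact mul_nonneg H.δ_pos.le
    (sub_nonneg.2 ((div_le_one (H.T_pos (k + 1) ω)).2 (H.T_mono ω k.le_succ)))

lemma γ_le (H : IsModelSystem F e T V A β γ δ) (k : ℕ) (ω : Ω) : γ k ω ≤ δ := by
  rw [H.γ_eq]
  exact mul_le_of_le_one_right H.δ_pos.le
    (sub_le_self 1 (div_pos (H.T_pos k ω) (H.T_pos (k + 1) ω)).le)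

lemma γ_le_logClock_sub (H : IsModelSystem F e T V A β γ δ) (k : ℕ) (ω : Ω) :
    γ k ω ≤ δ * (logClock T (k + 1) ω - logClock T k ω) := by
  have hT := H.T_pos k ω
  have hT' := H.T_pos (k + 1) ω
  have hlog := Real.log_le_sub_one_of_pos (div_pos hT hT')
  rw [Real.log_div hT.ne' hT'.ne'] at hlog
  rw [H.γ_eq]
  refine mul_le_mul_of_nonneg_left ?_ H.δ_pos.le
  simp only [logClock]
  linarith

lemma V_nonneg (H : IsModelSystem F e T V A β γ δ) (k : ℕ) (ω : Ω) : 0 ≤ V k ω := by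
  rw [H.V_eq]
  exact mul_nonneg (H.A_nonneg k ω) (div_pos (H.T_pos (k + 1) ω) (H.T_pos k ω)).le

lemma A_mul_one_add_le_V (H : IsModelSystem F e T V A β γ δ) (k : ℕ) (ω : Ω) :
    A k ω * (1 + γ k ω / δ) ≤ V k ω := by
  have hT := H.T_pos k ω
  have hT' := H.T_pos (k + 1) ω
  rw [H.V_eq, H.γ_eq, mul_div_cancel_left₀ _ H.δ_pos.ne']
  refine mul_le_mul_of_nonneg_left ?_ (H.A_nonneg k ω)
  have hsq : T (k + 1) ω / T k ω - (1 + (1 - T k ω / T (k + 1) ω)) =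
      (T (k + 1) ω - T k ω) ^ 2 / (T k ω * T (k + 1) ω) := by
    field_simp
    ring
  rw [← sub_nonneg, hsq]
  positivity

lemma summable_γ_mul_logClock_rpow_neg (H : IsModelSystem F e T V A β γ δ) (hκ : 1 < κ) (ω : Ω) :
    Summable fun k => γ k ω * logClock T (k + 1) ω ^ (-κ) := by
  have hN (k : ℕ) : 0 < logClock T k ω := one_pos.trans_le (H.one_le_logClock k ω)
  refine ((summable_sub_mul_rpow_neg hκ (H.logClock_mono ω) hN).mul_left δ).of_nonneg_of_le
    (fun k => mul_nonneg (H.γ_nonneg k ω) (Real.rpow_nonneg (hN _).le _)) fun k => ?_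
  rw [← mul_assoc]
  exact mul_le_mul_of_nonneg_right (H.γ_le_logClock_sub k ω) (Real.rpow_nonneg (hN _).le _)

lemma summable_logClock_rpow_neg_mul_γ_mul (H : IsModelSystem F e T V A β γ δ) (hκ : 1 < κ) (ω : Ω)
    {f : ℕ → ℝ} {D : ℝ} (hf0 : ∀ k, 0 ≤ f k) (hf : ∀ k, f k ≤ D) :
    Summable fun k => logClock T (k + 1) ω ^ (-κ) * (γ k ω * f k) := by
  have hw (k : ℕ) : 0 ≤ logClock T k ω ^ (-κ) :=
    Real.rpow_nonneg (zero_le_one.trans (H.one_le_logClock k ω)) _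
  refine ((H.summable_γ_mul_logClock_rpow_neg hκ ω).mul_right D).of_nonneg_of_le
    (fun k => mul_nonneg (hw _) (mul_nonneg (H.γ_nonneg k ω) (hf0 k))) fun k => ?_
  rw [← mul_assoc, mul_comm (_ ^ _)]
  exact mul_le_mul_of_nonneg_left (hf k) (mul_nonneg (H.γ_nonneg k ω) (hw _))

lemma ae_summable_logClock_rpow_neg_mul_γ_mul [IsFiniteMeasure μ]
    (H : IsModelSystem F e T V A β γ δ) (he : IsNoise μ F e σ a) (hκ : 1 < κ) {s c K : ℝ}
    (hs : 0 ≤ s) (hsa : s ≤ a) (hc : 0 ≤ c) (hK : 0 ≤ K) :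
    ∀ᵐ ω ∂μ, Summable fun k => logClock T (k + 1) ω ^ (-κ) *
      (γ k ω * (K + c * |(μ[fun ω => |e k ω| ^ s | F k]) ω|)) := by
  filter_upwards [he.abs_condExp_abs_rpow_le hs hsa] with ω ⟨D, hD⟩
  refine (H.summable_logClock_rpow_neg_mul_γ_mul hκ ω (D := K + c * D)
    (fun k => by positivity) fun k => ?_)
  gcongr
  exact hD k

lemma exists_lyapunov_recursion (H : IsModelSystem F e T V A β γ δ) (hr : 1 ≤ r) (hκ : 0 ≤ κ)
    (σ : ℝ) : ∃ C K : ℝ, 0 ≤ C ∧ 0 ≤ K ∧ ∀ (k : ℕ) (ω : Ω) (E : ℝ),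
      logClock T (k + 1) ω ^ (-κ) * V (k + 1) ω ^ r +
          logClock T (k + 1) ω ^ (-κ) * (γ k ω * A k ω ^ r / (2 * δ)) ≤
        logClock T k ω ^ (-κ) * V k ω ^ r +
          logClock T (k + 1) ω ^ (-κ) * (2 * r * A k ω ^ (r - 1) * β k ω * e k ω +
            C * A k ω ^ (r - 1) * γ k ω * (e k ω ^ 2 - σ ^ 2) +
            C * γ k ω ^ r * (|e k ω| ^ (2 * r) - E)) +
          logClock T (k + 1) ω ^ (-κ) * (γ k ω * (K + C * δ ^ (r - 1) * |E|)) := by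
  obtain ⟨C, K, hC, hK, hlyap⟩ := lyapunov_step hr H.δ_pos σ
  refine ⟨C, K, hC, hK, fun k ω E => ?_⟩
  have hN (k : ℕ) : 0 < logClock T k ω := one_pos.trans_le (H.one_le_logClock k ω)
  have hanti : logClock T (k + 1) ω ^ (-κ) ≤ logClock T k ω ^ (-κ) :=
    Real.rpow_le_rpow_of_nonpos (hN k) (H.logClock_mono ω k.le_succ) (neg_nonpos.2 hκ)
  have hstep := mul_le_mul_of_nonneg_left (hlyap (V k ω) (A k ω) (β k ω) (γ k ω) (e k ω) E
    (H.A_nonneg k ω) (H.γ_nonneg k ω) (H.γ_le k ω) (H.sq_β_le k ω) (H.A_mul_one_add_le_V k ω))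
    (Real.rpow_nonneg (hN (k + 1)).le (-κ))
  rw [← H.V_succ] at hstep
  have hV := mul_le_mul_of_nonneg_right hanti (Real.rpow_nonneg (H.V_nonneg k ω) r)
  linear_combination hstep + hV

lemma ae_summable_and_weighted_V_rpow_le [IsProbabilityMeasure μ]
    (H : IsModelSystem F e T V A β γ δ) (he : IsNoise μ F e σ a) (hr : 1 ≤ r) (hra : 2 * r ≤ a)
    (hκ : 1 < κ) :
    ∀ᵐ ω ∂μ, (Summable fun k => logClock T (k + 1) ω ^ (-κ) * (γ k ω * A k ω ^ r / (2 * δ))) ∧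
      ∃ K, ∀ n, logClock T n ω ^ (-κ) * V n ω ^ r ≤ K := by
  obtain ⟨C, K, hC, hK, hrec⟩ := H.exists_lyapunov_recursion hr (zero_le_one.trans hκ.le) σ
  have hδ := H.δ_pos
  have hN (k : ℕ) (ω : Ω) : 0 < logClock T k ω := one_pos.trans_le (H.one_le_logClock k ω)
  have hw (k : ℕ) (ω : Ω) : 0 ≤ logClock T k ω ^ (-κ) := Real.rpow_nonneg (hN k ω).le _
  set E : ℕ → Ω → ℝ := fun k => μ[fun ω => |e k ω| ^ (2 * r) | F k]
  set B : ℕ → Ω → ℝ := fun k ω =>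
    logClock T (k + 1) ω ^ (-κ) * (γ k ω * (K + C * δ ^ (r - 1) * |E k ω|))
  have hE (k : ℕ) : Measurable[F k] (E k) := stronglyMeasurable_condExp.measurable
  have hA (c s : ℝ) (k : ℕ) : Measurable[F k] fun ω => c * A k ω ^ s :=
    ((H.measurable_A k).pow_const s).const_mul c
  have hc₁ (k : ℕ) := (hA (2 * r) (r - 1) k).mul (H.measurable_β k)
  have hc₂ (k : ℕ) := (hA C (r - 1) k).mul (H.measurable_γ k)
  have hc₃ (k : ℕ) : Measurable[F k] fun ω => C * γ k ω ^ r :=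
    ((H.measurable_γ k).pow_const _).const_mul _
  have hwm (k : ℕ) : Measurable[F k] fun ω => logClock T (k + 1) ω ^ (-κ) :=
    (H.measurable_logClock_succ k).pow_const _
  have hV0 : Measurable[F 0] fun ω => logClock T 0 ω ^ (-κ) * V 0 ω ^ r := by
    simpa only [logClock, H.T_zero, Real.log_one, add_zero, Real.one_rpow, one_mul]
      using (H.measurable_V 0).pow_const r
  have hBm (k : ℕ) : Measurable[F k] (B k) := (hwm k).mul ((H.measurable_γ k).mul
    (((measurable_abs.comp (hE k)).const_mul (C * δ ^ (r - 1))).const_add K))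
  have hB0 (k : ℕ) (ω : Ω) : 0 ≤ B k ω :=
    mul_nonneg (hw _ ω) (mul_nonneg (H.γ_nonneg k ω) (by positivity))
  have hBsum : ∀ᵐ ω ∂μ, Summable fun k => B k ω :=
    H.ae_summable_logClock_rpow_neg_mul_γ_mul he hκ (by linarith) hra (by positivity) hK
  filter_upwards [robbins_siegmund
    (fun k => he.isLocalMDiff_comb (by linarith) (by linarith) hra (hwm k) (hc₁ k) (hc₂ k) (hc₃ k))
    (fun k => he.measurable_comb (2 * r) (hwm k) (hc₁ k) (hc₂ k) (hc₃ k)) hV0 hBm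
    (.of_forall fun ω k => mul_nonneg (hw k ω) (Real.rpow_nonneg (H.V_nonneg k ω) r)) hB0
    (fun k ω => mul_nonneg (hw _ ω) (div_nonneg (mul_nonneg (H.γ_nonneg k ω)
      (Real.rpow_nonneg (H.A_nonneg k ω) r)) (by positivity)))
    (.of_forall fun ω k => hrec k ω (E k ω)) hBsum] with ω ⟨_, hsum, hbdd⟩
  exact ⟨hsum, hbdd⟩

theorem ae_summable_and_V_rpow_le [IsProbabilityMeasure μ] (H : IsModelSystem F e T V A β γ δ)
    (he : IsNoise μ F e σ a) (hr : 1 ≤ r) (hra : 2 * r ≤ a) (hκ : 1 < κ) :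
    ∀ᵐ ω ∂μ, (Summable fun k => γ k ω * (1 + A k ω ^ r) * logClock T (k + 1) ω ^ (-κ)) ∧
      ∃ K, ∀ n, V n ω ^ r ≤ K * logClock T n ω ^ κ := by
  have hδ := H.δ_pos
  have hN (k : ℕ) (ω : Ω) : 0 < logClock T k ω := one_pos.trans_le (H.one_le_logClock k ω)
  filter_upwards [H.ae_summable_and_weighted_V_rpow_le he hr hra hκ] with ω ⟨hsum, K, hK⟩
  refine ⟨((hsum.mul_left (2 * δ)).add (H.summable_γ_mul_logClock_rpow_neg hκ ω)).congr
    fun k => ?_, K, fun n => ?_⟩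
  · field_simp
    ring
  · have h := hK n
    rw [Real.rpow_neg (hN n ω).le, ← div_eq_inv_mul] at h
    exact (div_le_iff₀ (Real.rpow_pos_of_pos (hN n ω) κ)).1 h

end IsModelSystem

end ModelSystem

section NoiseRemoval

open Asymptotics

lemma pow_le_one_add_pow {x : ℝ} (hx : 0 ≤ x) {i n : ℕ} (hin : i ≤ n) : x ^ i ≤ 1 + x ^ n := by
  exact_mod_cast rpow_le_one_add_rpow hx i.cast_nonneg (Nat.cast_le.2 hin)

lemma isBigO_expansion_remainder {ι : Type*} {l : Filter ι} {A B G X g : ι → ℝ}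
    (hX : ∀ k, 0 ≤ X k) (hg : ∀ k, 0 ≤ g k) (hA : A =O[l] fun k => X k ^ 2)
    (hB : B =O[l] fun k => X k * g k) (hG : G =O[l] fun k => g k ^ 2) (q : ℕ) :
    (fun k => (A k + B k + G k) ^ (q + 2) - A k ^ (q + 2) - (q + 2) * A k ^ (q + 1) * (B k + G k) -
      (q + 2) * (q + 1) / 2 * A k ^ q * B k ^ 2)
      =O[l] fun k => g k ^ 3 * (X k + g k) ^ (2 * q + 1) := by
  set Z : ι → ℝ := fun k => X k + g k
  have hXZ : X =O[l] Z := .of_norm_le fun k => by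
    rw [Real.norm_of_nonneg (hX k)]
    exact le_add_of_nonneg_right (hg k)
  have hgZ : g =O[l] Z := .of_norm_le fun k => by
    rw [Real.norm_of_nonneg (hg k)]
    exact le_add_of_nonneg_left (hX k)
  have hBZ : B =O[l] fun k => g k * Z k :=
    hB.trans ((hXZ.mul (isBigO_refl g l)).congr_right fun k => mul_comm _ _)
  have hGZ : G =O[l] fun k => g k * Z k :=
    hG.trans (((isBigO_refl g l).mul hgZ).congr_left fun k => (sq _).symm)
  have hAZ : A =O[l] fun k => Z k ^ 2 := hA.trans (hXZ.pow 2)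
  have hsumZ : (fun k => A k + B k + G k) =O[l] fun k => Z k ^ 2 := by
    have hgZ2 : (fun k => g k * Z k) =O[l] fun k => Z k ^ 2 :=
      (hgZ.mul (isBigO_refl Z l)).congr_right fun k => (sq _).symm
    exact (hAZ.add (hBZ.trans hgZ2)).add (hGZ.trans hgZ2)
  have hcross : (fun k => (2 * B k + G k) * G k) =O[l] fun k => g k ^ 3 * Z k :=
    (((hBZ.const_mul_left 2).add hGZ).mul hG).congr_right fun k => by ring
  have hcube : (fun k => B k ^ 2 * (B k + G k)) =O[l] fun k => g k ^ 3 * Z k ^ 3 := by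
    refine ((hBZ.pow 2).mul (hBZ.add hGZ)).congr_right fun k => by ring
  induction q with
  | zero =>
    refine hcross.congr (fun k => ?_) fun k => ?_
    · rw [Nat.cast_zero]; ring
    · simp only [Z, mul_zero, zero_add, pow_one]
  | succ q ih =>
    have hlead : (fun k => A k ^ (q + 1) * ((2 * B k + G k) * G k)) =O[l]
        fun k => g k ^ 3 * Z k ^ (2 * (q + 1) + 1) :=
      ((hAZ.pow (q + 1)).mul hcross).congr_right fun k => by rw [← pow_mul]; ring
    have hquad : (fun k => A k ^ q * (B k ^ 2 * (B k + G k))) =O[l]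
        fun k => g k ^ 3 * Z k ^ (2 * (q + 1) + 1) :=
      ((hAZ.pow q).mul hcube).congr_right fun k => by rw [← pow_mul]; ring
    have hexp (k : ι) : Z k ^ 2 * (g k ^ 3 * Z k ^ (2 * q + 1)) =
        g k ^ 3 * Z k ^ (2 * (q + 1) + 1) := by ring
    refine ((((hsumZ.mul ih).congr_right hexp).add (hlead.const_mul_left (q + 2))).add
      (hquad.const_mul_left ((q + 2) * (q + 1) / 2))).congr_left fun k => ?_
    push_cast
    ring

lemma summable_div_rpow_of_isBigO {c N Y W : ℕ → ℝ} {b s : ℝ} {t : ℕ} (hb : 0 ≤ b) (hbs : b ≤ s)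
    (hts : 2 ≤ t * s) (hN : ∀ k, 0 < N k) (hY : ∀ k, 0 ≤ Y k) (hW : ∀ k, 0 ≤ W k)
    (hW0 : Tendsto W atTop (𝓝 0)) (hYN : Y =O[atTop] N)
    (hsum : Summable fun k => W k ^ 2 * (Y k / N k) ^ b)
    (hc : c =O[atTop] fun k => W k ^ t * Y k) : Summable fun k => (|c k| / N k) ^ s := by
  have hs : 0 ≤ s := hb.trans hbs
  have hratio (k : ℕ) : 0 ≤ Y k / N k := div_nonneg (hY k) (hN k).le
  have hcN : (fun k => |c k| / N k) =O[atTop] fun k => W k ^ t * (Y k / N k) :=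
    (hc.norm_left.mul (isBigO_refl (fun k => (N k)⁻¹) atTop)).congr
      (fun k => (div_eq_mul_inv _ _).symm) fun k => by rw [mul_assoc, ← div_eq_mul_inv]
  have hsmall : (fun k => W k ^ (t * s - 2) * (Y k / N k) ^ (s - b)) =O[atTop]
      fun _ => (1 : ℝ) := by
    have hWO := (hW0.isBigO_one ℝ).rpow (sub_nonneg.2 hts) (.of_forall fun _ => zero_le_one)
    have hYO : (fun k => Y k / N k) =O[atTop] fun _ => (1 : ℝ) :=
      (hYN.mul (isBigO_refl (fun k => (N k)⁻¹) atTop)).congr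
        (fun k => (div_eq_mul_inv _ _).symm) fun k => mul_inv_cancel₀ (hN k).ne'
    have := hWO.mul (hYO.rpow (sub_nonneg.2 hbs) (.of_forall fun _ => zero_le_one))
    simpa only [Real.one_rpow, mul_one] using this
  have hsplit (k : ℕ) : (W k ^ t * (Y k / N k)) ^ s =
      W k ^ 2 * (Y k / N k) ^ b * (W k ^ (t * s - 2) * (Y k / N k) ^ (s - b)) := by
    rw [Real.mul_rpow (pow_nonneg (hW k) t) (hratio k), ← Real.rpow_natCast, ← Real.rpow_mul (hW k),
      ← Real.rpow_two, mul_mul_mul_comm, ← Real.rpow_add_of_nonneg (hW k) zero_le_two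
      (sub_nonneg.2 hts), ← Real.rpow_add_of_nonneg (hratio k) hb (sub_nonneg.2 hbs),
      add_sub_cancel, add_sub_cancel]
  refine summable_of_isBigO_nat hsum ((hcN.rpow hs (.of_forall fun k => ?_)).trans ?_)
  · exact mul_nonneg (pow_nonneg (hW k) t) (hratio k)
  · simp only [hsplit]
    simpa only [mul_one] using (isBigO_refl (fun k => W k ^ 2 * (Y k / N k) ^ b) atTop).mul hsmall

variable {Ω : Type*} {m0 : MeasurableSpace Ω} {μ : Measure Ω} {F : Filtration ℕ m0}
  {e N X W A β γ c : ℕ → Ω → ℝ} {σ a b s : ℝ} {p q : ℕ}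

/-- Envelopes `X`, `W` for a recursion `A ↦ A + 2 e β + e ^ 2 γ`: the state is `A = O(X ^ 2)`, one
step has size `O(W)`, and moments of order `2 * p` of the state grow at most like the clock. -/
structure IsEnvelope (μ : Measure Ω) (F : Filtration ℕ m0) (N X W : ℕ → Ω → ℝ) (p : ℕ) (b : ℝ) :
    Prop where
  measurable_X : ∀ k, Measurable[F k] (X k)
  measurable_W : ∀ k, Measurable[F k] (W k)
  X_nonneg : ∀ k ω, 0 ≤ X k ω
  W_nonneg : ∀ k ω, 0 ≤ W k ω
  W_tendsto : ∀ᵐ ω ∂μ, Tendsto (fun k => W k ω) atTop (𝓝 0)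
  isBigO : ∀ᵐ ω ∂μ, (fun k => 1 + X k ω ^ (2 * p)) =O[atTop] fun k => N (k + 1) ω
  summable : ∀ᵐ ω ∂μ, Summable fun k => W k ω ^ 2 * ((1 + X k ω ^ (2 * p)) / N (k + 1) ω) ^ b

/-- Predictable coefficients of a recursion `A ↦ A + 2 e β + e ^ 2 γ` controlled by envelopes. -/
structure IsEnveloped (μ : Measure Ω) (F : Filtration ℕ m0) (X W A β γ : ℕ → Ω → ℝ) : Prop where
  measurable_A : ∀ k, Measurable[F k] (A k)
  measurable_β : ∀ k, Measurable[F k] (β k)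
  measurable_γ : ∀ k, Measurable[F k] (γ k)
  A_isBigO : ∀ᵐ ω ∂μ, (fun k => A k ω) =O[atTop] fun k => X k ω ^ 2
  β_isBigO : ∀ᵐ ω ∂μ, (fun k => β k ω) =O[atTop] fun k => X k ω * W k ω
  γ_isBigO : ∀ᵐ ω ∂μ, (fun k => γ k ω) =O[atTop] fun k => W k ω ^ 2

/-- Coefficient of `E[e ^ 2]` in the conditional mean of `(A + 2 e β + e ^ 2 γ) ^ (q + 1)`. -/
def sqCoeff (q : ℕ) (A β γ : ℝ) : ℝ := (q + 1) * (A ^ q * γ + 2 * q * A ^ (q - 1) * β ^ 2)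

lemma IsEnvelope.summable_div_rpow (hE : IsEnvelope μ F N X W p b) (hN : IsClock μ F N) {t : ℕ}
    (hb : 0 ≤ b) (hbs : b ≤ s) (hts : 2 ≤ t * s)
    (hc : ∀ᵐ ω ∂μ, (fun k => c k ω) =O[atTop] fun k => W k ω ^ t * (1 + X k ω ^ (2 * p))) :
    ∀ᵐ ω ∂μ, Summable fun k => (|c k ω| / N (k + 1) ω) ^ s := by
  filter_upwards [hE.W_tendsto, hE.isBigO, hE.summable, hc] with ω hW hO hsum hcω
  exact summable_div_rpow_of_isBigO hb hbs hts (fun k => one_pos.trans_le (hN.one_le (k + 1) ω))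
    (fun k => add_nonneg zero_le_one (pow_nonneg (hE.X_nonneg k ω) _)) (hE.W_nonneg · ω) hW hO hsum
    hcω

lemma IsNoise.isLittleO_sum_mul_abs_rpow [IsProbabilityMeasure μ] (he : IsNoise μ F e σ a)
    (hN : IsClock μ F N) (hb : 1 < b) (hb2 : b ≤ 2) (hs : 0 ≤ s) (hsb : s * b ≤ a)
    (hc : ∀ k, Measurable[F k] (c k))
    (hsum : ∀ᵐ ω ∂μ, Summable fun k => (|c k ω| / N (k + 1) ω) ^ b) :
    ∀ᵐ ω ∂μ, ∀ u : ℕ → ℝ, (∀ k, 0 ≤ u k) → (fun k => c k ω) =o[atTop] u →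
      ((fun n => ∑ k ∈ range n, u k) =O[atTop] fun n => N n ω) →
      (fun n => ∑ k ∈ range n, c k ω * |e k ω| ^ s) =o[atTop] fun n => N n ω := by
  have hsa : s ≤ a := (le_mul_of_one_le_right hs hb.le).trans hsb
  filter_upwards [he.strong_law_abs_rpow hb hb2 hs hsb hN hc hsum,
    he.abs_condExp_abs_rpow_le hs hsa, hN.tendsto] with ω hfluct ⟨C, hC⟩ htend u hu hcu huN
  have hcomp : (fun k => c k ω * (μ[fun ω => |e k ω| ^ s | F k]) ω) =o[atTop] u := by
    simpa only [mul_one] using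
      hcu.mul_isBigO ((IsBigO.of_norm_le hC).trans (isBigO_const_const C one_ne_zero _))
  refine (hfluct.add (isLittleO_sum_range_of_isBigO hu htend hcomp huN)).congr_left fun n => ?_
  rw [← sum_add_distrib]
  exact sum_congr rfl fun k _ => by ring

lemma isLittleO_pow_mul {w y u : ℕ → ℝ} (hw : Tendsto w atTop (𝓝 0)) (j : ℕ)
    (hyu : y =O[atTop] u) :
    (fun k => w k ^ (j + 3) * y k) =o[atTop] fun k => w k ^ 2 * u k := by
  have hwj : (fun k => w k ^ (j + 1)) =o[atTop] fun _ => (1 : ℝ) :=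
    (isLittleO_one_iff ℝ).2 (by simpa using hw.pow (j + 1))
  refine ((isBigO_refl (fun k => w k ^ 2) atTop).mul_isLittleO (hwj.mul_isBigO hyu)).congr
    (fun k => by ring) fun k => by rw [one_mul]

lemma IsNoise.isLittleO_sum_pow_mul_abs_rpow [IsProbabilityMeasure μ] {y : ℕ → Ω → ℝ}
    (he : IsNoise μ F e σ a) (hN : IsClock μ F N) (hE : IsEnvelope μ F N X W p b) (hb : 1 < b)
    (hb2 : b ≤ 2) (hs : 0 ≤ s) (hsb : s * b ≤ a) (hq : q ≤ p) (hy : ∀ k, Measurable[F k] (y k))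
    (hy0 : ∀ k ω, 0 ≤ y k ω) (hyX : ∀ k ω, y k ω ≤ 1 + X k ω ^ (2 * q)) (j : ℕ) :
    ∀ᵐ ω ∂μ, ((fun n => ∑ k ∈ range n, W k ω ^ 2 * (1 + X k ω ^ (2 * q))) =O[atTop]
      fun n => N n ω) → (fun n => ∑ k ∈ range n, W k ω ^ (j + 3) * y k ω * |e k ω| ^ s) =o[atTop]
      fun n => N n ω := by
  have hyO (ω : Ω) : (fun k => y k ω) =O[atTop] fun k => 1 + X k ω ^ (2 * q) :=
    .of_norm_le fun k => by
      rw [Real.norm_of_nonneg (hy0 k ω)]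
      exact hyX k ω
  have hqp (ω : Ω) : (fun k => 1 + X k ω ^ (2 * q)) =O[atTop] fun k => 1 + X k ω ^ (2 * p) := by
    refine .of_bound 2 (.of_forall fun k => ?_)
    have hX := hE.X_nonneg k ω
    rw [Real.norm_of_nonneg (by positivity), Real.norm_of_nonneg (by positivity)]
    linarith [pow_le_one_add_pow hX (show 2 * q ≤ 2 * p by omega), pow_nonneg hX (2 * p)]
  have hsum := hE.summable_div_rpow (c := fun k ω => W k ω ^ (j + 3) * y k ω) (t := 2) hN
    (zero_le_one.trans hb.le) le_rfl (by norm_num; linarith) (by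
      filter_upwards [hE.W_tendsto] with ω hW
      exact (isLittleO_pow_mul hW j ((hyO ω).trans (hqp ω))).isBigO)
  filter_upwards [hE.W_tendsto, he.isLittleO_sum_mul_abs_rpow hN hb hb2 hs hsb
    (fun k => ((hE.measurable_W k).pow_const (j + 3)).mul (hy k)) hsum] with ω hW h hbdd
  refine h _ (fun k => ?_) (isLittleO_pow_mul hW j (hyO ω)) hbdd
  have hX := hE.X_nonneg k ω
  positivity

lemma isBigO_noise_expansion_remainder {A β γ X W e : ℕ → ℝ} (hX : ∀ k, 0 ≤ X k)
    (hW : ∀ k, 0 ≤ W k) (hA : A =O[atTop] fun k => X k ^ 2)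
    (hβ : β =O[atTop] fun k => X k * W k) (hγ : γ =O[atTop] fun k => W k ^ 2) (q : ℕ) :
    (fun k => (A k + 2 * e k * β k + e k ^ 2 * γ k) ^ (q + 2) - A k ^ (q + 2) -
      (q + 2) * A k ^ (q + 1) * (2 * e k * β k + e k ^ 2 * γ k) -
      (q + 2) * (q + 1) / 2 * A k ^ q * (2 * e k * β k) ^ 2) =O[atTop]
    fun k => W k ^ 3 * X k ^ (2 * q + 1) * |e k| ^ 3 +
      W k ^ (2 * q + 4) * |e k| ^ (2 * q + 4) := by
  have hg (k : ℕ) : 0 ≤ W k * |e k| := mul_nonneg (hW k) (abs_nonneg _)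
  have he : (fun k => 2 * e k) =O[atTop] fun k => |e k| :=
    ((isBigO_refl e atTop).const_mul_left 2).abs_right
  have hB : (fun k => 2 * e k * β k) =O[atTop] fun k => X k * (W k * |e k|) :=
    (he.mul hβ).congr_right fun k => by ring
  have hG : (fun k => e k ^ 2 * γ k) =O[atTop] fun k => (W k * |e k|) ^ 2 :=
    ((isBigO_refl (fun k => e k ^ 2) atTop).mul hγ).congr_right fun k => by
      rw [mul_pow, sq_abs, mul_comm]
  refine (isBigO_expansion_remainder hX hg hA hB hG q).trans
    (.of_bound (2 ^ (2 * q)) (.of_forall fun k => ?_))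
  have hXk := hX k
  have hWk := hW k
  rw [Real.norm_of_nonneg (by positivity), Real.norm_of_nonneg (by positivity)]
  calc (W k * |e k|) ^ 3 * (X k + W k * |e k|) ^ (2 * q + 1)
      ≤ (W k * |e k|) ^ 3 * (2 ^ (2 * q) * (X k ^ (2 * q + 1) + (W k * |e k|) ^ (2 * q + 1))) := by
        gcongr
        exact add_pow_le hXk (hg k) (2 * q + 1)
    _ = _ := by ring

lemma IsNoise.isLittleO_sum_expansion_remainder [IsProbabilityMeasure μ] (he : IsNoise μ F e σ a)
    (hN : IsClock μ F N) (hE : IsEnvelope μ F N X W p b) (hA : IsEnveloped μ F X W A β γ)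
    (hb : 1 < b) (hb2 : b ≤ 2) (hpa : 2 * p * b ≤ a) (hq : q + 2 ≤ p) :
    ∀ᵐ ω ∂μ, ((fun n => ∑ k ∈ range n, W k ω ^ 2 * (1 + X k ω ^ (2 * (q + 1)))) =O[atTop]
      fun n => N n ω) →
      (fun n => ∑ k ∈ range n, ((A k ω + 2 * e k ω * β k ω + e k ω ^ 2 * γ k ω) ^ (q + 2) -
        A k ω ^ (q + 2) - (q + 2) * A k ω ^ (q + 1) * (2 * e k ω * β k ω + e k ω ^ 2 * γ k ω) -
        (q + 2) * (q + 1) / 2 * A k ω ^ q * (2 * e k ω * β k ω) ^ 2)) =o[atTop]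
      fun n => N n ω := by
  have hqp : (q : ℝ) + 2 ≤ p := by exact_mod_cast hq
  have hmoment {s : ℕ} (hs : s ≤ 2 * (q + 2)) : ((s : ℕ) : ℝ) * b ≤ a := by
    have : (s : ℝ) ≤ 2 * (q + 2) := by exact_mod_cast hs
    exact (by gcongr; linarith : (s : ℝ) * b ≤ 2 * p * b).trans hpa
  filter_upwards [hA.A_isBigO, hA.β_isBigO, hA.γ_isBigO, hN.tendsto,
    he.isLittleO_sum_pow_mul_abs_rpow hN hE hb hb2 (s := (3 : ℕ)) (by positivity)
      (hmoment (by omega)) (show q + 1 ≤ p by omega)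
      (fun k => (hE.measurable_X k).pow_const (2 * q + 1))
      (fun k ω => pow_nonneg (hE.X_nonneg k ω) _)
      (fun k ω => pow_le_one_add_pow (hE.X_nonneg k ω) (by omega)) 0,
    he.isLittleO_sum_pow_mul_abs_rpow hN hE hb hb2 (s := (2 * q + 4 : ℕ)) (by positivity)
      (hmoment (by omega)) (show q + 1 ≤ p by omega) (fun k => measurable_const (a := (1 : ℝ)))
      (fun _ _ => zero_le_one)
      (fun k ω => le_add_of_nonneg_right (pow_nonneg (hE.X_nonneg k ω) _)) (2 * q + 1)]
    with ω hAω hβω hγω htend hcube hpow hbdd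
  refine isLittleO_sum_range_of_isLittleO (fun k => ?_) htend
    (isBigO_noise_expansion_remainder (hE.X_nonneg · ω) (hE.W_nonneg · ω) hAω hβω hγω q) ?_
  · have hX := hE.X_nonneg k ω
    have hW := hE.W_nonneg k ω
    positivity
  · simpa only [Real.rpow_natCast, zero_add, mul_one, ← sum_add_distrib, add_assoc, Nat.reduceAdd]
      using (hcube hbdd).add (hpow hbdd)

lemma isBigO_sqCoeff {A β γ X W : ℕ → ℝ} (hA : A =O[atTop] fun k => X k ^ 2)
    (hβ : β =O[atTop] fun k => X k * W k) (hγ : γ =O[atTop] fun k => W k ^ 2) (q : ℕ) :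
    (fun k => sqCoeff q (A k) (β k) (γ k)) =O[atTop] fun k => W k ^ 2 * X k ^ (2 * q) := by
  have hfirst : (fun k => A k ^ q * γ k) =O[atTop] fun k => W k ^ 2 * X k ^ (2 * q) :=
    ((hA.pow q).mul hγ).congr_right fun k => by rw [← pow_mul, mul_comm]
  refine IsBigO.const_mul_left (hfirst.add ?_) _
  cases q with
  | zero => simpa using isBigO_zero _ _
  | succ q =>
    refine (((hA.pow q).const_mul_left (2 * ((q + 1 : ℕ) : ℝ))).mul (hβ.pow 2)).congr_right
      fun k => ?_
    rw [← pow_mul]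
    ring

lemma IsEnveloped.measurable_sqCoeff (hA : IsEnveloped μ F X W A β γ) (q k : ℕ) :
    Measurable[F k] fun ω => sqCoeff q (A k ω) (β k ω) (γ k ω) :=
  ((((hA.measurable_A k).pow_const q).mul (hA.measurable_γ k)).add
    ((((hA.measurable_A k).pow_const (q - 1)).const_mul (2 * (q : ℝ))).mul
      ((hA.measurable_β k).pow_const 2))).const_mul ((q : ℝ) + 1)

lemma IsEnvelope.isBigO_pow_mul_pow (hE : IsEnvelope μ F N X W p b) {i : ℕ} (hi : i ≤ 2 * p)
    (t : ℕ) (ω : Ω) : (fun k => W k ω ^ t * X k ω ^ i) =O[atTop]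
      fun k => W k ω ^ t * (1 + X k ω ^ (2 * p)) := .of_norm_le fun k => by
  have hX := hE.X_nonneg k ω
  have hW := hE.W_nonneg k ω
  rw [Real.norm_of_nonneg (by positivity)]
  gcongr
  exact pow_le_one_add_pow hX hi

lemma IsNoise.isLittleO_sum_pow_mul_mul [IsProbabilityMeasure μ] (he : IsNoise μ F e σ a)
    (hN : IsClock μ F N) (hE : IsEnvelope μ F N X W p b) (hA : IsEnveloped μ F X W A β γ)
    (hb : 0 ≤ b) (hb2 : b ≤ 2) (ha : 2 ≤ a) (hq : q < p) :
    ∀ᵐ ω ∂μ, (fun n => ∑ k ∈ range n, A k ω ^ q * β k ω * e k ω) =o[atTop] fun n => N n ω := by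
  refine he.strong_law (c := fun k ω => A k ω ^ q * β k ω) ha hN
    (fun k => ((hA.measurable_A k).pow_const q).mul (hA.measurable_β k))
    (hE.summable_div_rpow (t := 1) hN hb hb2 (by norm_num) ?_)
  filter_upwards [hA.A_isBigO, hA.β_isBigO] with ω hAω hβω
  have : (fun k => A k ω ^ q * β k ω) =O[atTop] fun k => W k ω ^ 1 * X k ω ^ (2 * q + 1) :=
    ((hAω.pow q).mul hβω).congr_right fun k => by rw [← pow_mul]; ring
  exact this.trans (hE.isBigO_pow_mul_pow (by omega) 1 ω)

lemma IsNoise.isLittleO_sum_sqCoeff_mul [IsProbabilityMeasure μ] (he : IsNoise μ F e σ a)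
    (hN : IsClock μ F N) (hE : IsEnvelope μ F N X W p b) (hA : IsEnveloped μ F X W A β γ)
    (hb : 1 < b) (hb2 : b ≤ 2) (hba : 2 * b ≤ a) (hq : q < p) :
    ∀ᵐ ω ∂μ, (fun n => ∑ k ∈ range n, sqCoeff q (A k ω) (β k ω) (γ k ω) * (e k ω ^ 2 - σ ^ 2))
      =o[atTop] fun n => N n ω := by
  refine he.strong_law_sq hb hb2 hba hN (hA.measurable_sqCoeff q)
    (hE.summable_div_rpow (t := 2) hN (zero_le_one.trans hb.le) le_rfl (by norm_num; linarith) ?_)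
  filter_upwards [hA.A_isBigO, hA.β_isBigO, hA.γ_isBigO] with ω hAω hβω hγω
  exact (isBigO_sqCoeff hAω hβω hγω q).trans (hE.isBigO_pow_mul_pow (by omega) 2 ω)

theorem IsNoise.isLittleO_sum_sub_sqCoeff [IsProbabilityMeasure μ] (he : IsNoise μ F e σ a)
    (hN : IsClock μ F N) (hE : IsEnvelope μ F N X W p b) (hA : IsEnveloped μ F X W A β γ)
    (hb : 1 < b) (hb2 : b ≤ 2) (hpa : 2 * p * b ≤ a) (hq : q < p) :
    ∀ᵐ ω ∂μ, ((fun n => ∑ k ∈ range n, W k ω ^ 2 * (1 + X k ω ^ (2 * q))) =O[atTop]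
      fun n => N n ω) →
      (fun n => ∑ k ∈ range n, ((A k ω + 2 * e k ω * β k ω + e k ω ^ 2 * γ k ω) ^ (q + 1) -
        A k ω ^ (q + 1) - σ ^ 2 * sqCoeff q (A k ω) (β k ω) (γ k ω))) =o[atTop]
      fun n => N n ω := by
  have hba : 2 * b ≤ a := by
    have hp : (1 : ℝ) ≤ p := by exact_mod_cast (Nat.zero_le q).trans_lt hq
    nlinarith
  have hlin := he.isLittleO_sum_pow_mul_mul hN hE hA (zero_le_one.trans hb.le) hb2 (by linarith) hq
  have hsq := he.isLittleO_sum_sqCoeff_mul hN hE hA hb hb2 hba hq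
  cases q with
  | zero =>
    filter_upwards [hlin, hsq] with ω hlin hsq _
    refine ((hlin.const_mul_left 2).add hsq).congr_left fun n => ?_
    rw [mul_sum, ← sum_add_distrib]
    refine sum_congr rfl fun k _ => ?_
    simp only [sqCoeff, Nat.cast_zero]
    ring
  | succ q =>
    filter_upwards [hlin, hsq, he.isLittleO_sum_expansion_remainder hN hE hA hb hb2 hpa hq]
      with ω hlin hsq hrem hbdd
    refine (((hrem hbdd).add (hlin.const_mul_left (2 * (q + 2)))).add hsq).congr_left fun n => ?_
    rw [mul_sum, ← sum_add_distrib, ← sum_add_distrib]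
    refine sum_congr rfl fun k _ => ?_
    simp only [sqCoeff, Nat.add_sub_cancel]
    push_cast
    ring

end NoiseRemoval

section PathwiseInduction

open Asymptotics

/-- The sums of `f`, normalized by `N`, converge to `x`. -/
def CesaroTendsto (N f : ℕ → ℝ) (x : ℝ) : Prop :=
  Tendsto (fun n => (∑ k ∈ range n, f k) / N n) atTop (𝓝 x)

variable {N f g u : ℕ → ℝ} {x y : ℝ}

lemma CesaroTendsto.add (hf : CesaroTendsto N f x) (hg : CesaroTendsto N g y) :
    CesaroTendsto N (fun k => f k + g k) (x + y) := by
  simpa only [CesaroTendsto, sum_add_distrib, add_div] using Tendsto.add hf hg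

lemma CesaroTendsto.const_mul (c : ℝ) (hf : CesaroTendsto N f x) :
    CesaroTendsto N (fun k => c * f k) (c * x) := by
  simpa only [CesaroTendsto, ← mul_sum, mul_div_assoc] using Tendsto.const_mul c hf

lemma CesaroTendsto.of_isLittleO_sum_sub (hf : CesaroTendsto N f x)
    (hfg : (fun n => ∑ k ∈ range n, (f k - g k)) =o[atTop] N) : CesaroTendsto N g x := by
  simpa only [CesaroTendsto, sum_sub_distrib, sub_div, sub_sub_cancel, sub_zero] using
    Tendsto.sub hf hfg.tendsto_div_nhds_zero

lemma CesaroTendsto.isBigO (hN : Tendsto N atTop atTop) (hf : CesaroTendsto N f x) :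
    (fun n => ∑ k ∈ range n, f k) =O[atTop] N :=
  isBigO_of_div_tendsto_nhds
    ((hN.eventually_ne_atTop 0).mono fun _ hn h => absurd h hn) x hf

lemma CesaroTendsto.of_sub_isLittleO (hN : Tendsto N atTop atTop) (hf : CesaroTendsto N f x)
    (hu : ∀ k, 0 ≤ u k) (hfg : (fun k => f k - g k) =o[atTop] u) (huN : CesaroTendsto N u y) :
    CesaroTendsto N g x :=
  hf.of_isLittleO_sum_sub (isLittleO_sum_range_of_isBigO hu hN hfg (huN.isBigO hN))

lemma CesaroTendsto.sub_of_succ_sub {v : ℕ → ℝ} (hN : Tendsto N atTop atTop) (hv : v =o[atTop] N)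
    (h : CesaroTendsto N (fun k => v (k + 1) - f k) x) :
    CesaroTendsto N (fun k => v k - f k) x := by
  refine h.of_isLittleO_sum_sub ?_
  have hconst : (fun _ => v 0) =o[atTop] N :=
    isLittleO_const_left.2 (.inr (tendsto_norm_atTop_atTop.comp hN))
  simpa only [sub_sub_sub_cancel_right, sum_range_sub] using hv.sub hconst

lemma isLittleO_mul_sub_mul {ι : Type*} {l : Filter ι} {f f' g g' u v : ι → ℝ}
    (hf : (fun k => f' k - f k) =o[l] u) (hg : (fun k => g' k - g k) =o[l] v)
    (hfu : f =O[l] u) (hgv : g =O[l] v) :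
    (fun k => f' k * g' k - f k * g k) =o[l] fun k => u k * v k := by
  have hg'v : g' =O[l] v := (hg.isBigO.add hgv).congr_left fun k => sub_add_cancel _ _
  exact ((hf.mul_isBigO hg'v).add (hfu.mul_isLittleO hg)).congr_left fun k => by ring

lemma isLittleO_pow_succ_sub_pow_succ {ι : Type*} {l : Filter ι} {V A A' D u : ι → ℝ}
    (hV : V ~[l] A) (hA : A' ~[l] A) (hD : (fun k => V k - A' k - D k) =o[l] u) (hDu : D =O[l] u)
    (q : ℕ) : (fun k => V k ^ (q + 1) - A' k ^ (q + 1) - (q + 1) * A k ^ q * D k)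
      =o[l] fun k => A k ^ q * u k := by
  have hterm (i : ℕ) (hi : i ∈ range (q + 1)) :
      (fun k => V k ^ i * A' k ^ (q - i) - A k ^ q) =o[l] fun k => A k ^ q := by
    have := (hV.pow i).mul (hA.pow (q - i))
    simpa only [IsEquivalent, Pi.mul_def, Pi.pow_def, Pi.sub_def, ← pow_add,
      Nat.add_sub_cancel' (mem_range_succ_iff.1 hi)] using this
  have hsum : (fun k => ∑ i ∈ range (q + 1), V k ^ i * A' k ^ (q - i) - (q + 1) * A k ^ q)
      =o[l] fun k => A k ^ q := by
    refine (IsLittleO.sum hterm).congr_left fun k => ?_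
    rw [Finset.sum_apply, sum_sub_distrib, sum_const, card_range, nsmul_eq_mul, Nat.cast_succ]
  refine (isLittleO_mul_sub_mul hsum hD ((isBigO_refl _ l).const_mul_left _) hDu).congr_left
    fun k => ?_
  have := geom_sum₂_mul (V k) (A' k) (q + 1)
  rw [Nat.add_sub_cancel] at this
  rw [this]

variable {V A β γ V' A' β' γ' : ℕ → ℝ} {δ σ : ℝ} {p q : ℕ}

/-- One path of a model system `(V, A, β, γ)` (with `V k = M_kᵗ L⁻¹ M_k / T_k`) and of the system
`(V', A', β', γ')` it approximates (with `V' k = M_kᵗ S_{k-1}⁻¹ M_k` and `A' k = M_kᵗ S_k⁻¹ M_k`),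
in which the noise has been averaged out. -/
structure IsApproximatedPath (N V A β γ V' A' β' γ' : ℕ → ℝ) (δ σ : ℝ) (p : ℕ) : Prop where
  tendsto_N : Tendsto N atTop atTop
  A_nonneg : ∀ k, 0 ≤ A k
  γ_nonneg : ∀ k, 0 ≤ γ k
  V_nonneg : ∀ k, 0 ≤ V k
  sq_β_le : ∀ k, β k ^ 2 ≤ A k * γ k
  V_mul : ∀ k, V k * (1 - γ k / δ) = A k
  tendsto_γ : Tendsto γ atTop (𝓝 0)
  cesaro_γ : CesaroTendsto N γ δ
  V'_eq : ∀ k, V' k = A' k + β' k ^ 2 / (1 - γ' k)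
  A'_isEquivalent : A' ~[atTop] A
  γ'_isEquivalent : γ' ~[atTop] γ
  β'_sub_isLittleO : (fun k => β' k - β k) =o[atTop] fun k => √(A k) * √(γ k)
  V_pow_isLittleO : ∀ q < p, (fun k => V k ^ (q + 1)) =o[atTop] N
  isLittleO_sum : ∀ q < p, ((fun n => ∑ k ∈ range n, γ k * (1 + A k ^ q)) =O[atTop] N) →
    (fun n => ∑ k ∈ range n, (V (k + 1) ^ (q + 1) - A k ^ (q + 1) -
      σ ^ 2 * sqCoeff q (A k) (β k) (γ k))) =o[atTop] N
  isLittleO_sum' : ∀ q < p, ((fun n => ∑ k ∈ range n, γ k * (1 + A k ^ q)) =O[atTop] N) →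
    (fun n => ∑ k ∈ range n, (V' (k + 1) ^ (q + 1) - A' k ^ (q + 1) -
      σ ^ 2 * sqCoeff q (A' k) (β' k) (γ' k))) =o[atTop] N

namespace IsApproximatedPath

variable (H : IsApproximatedPath N V A β γ V' A' β' γ' δ σ p)
include H

lemma sq_β_isBigO : (fun k => β k ^ 2) =O[atTop] fun k => A k * γ k :=
  .of_norm_le fun k => by
    rw [Real.norm_of_nonneg (sq_nonneg _)]
    exact H.sq_β_le k

lemma sq_β'_sub_isLittleO : (fun k => β' k ^ 2 - β k ^ 2) =o[atTop] fun k => A k * γ k := by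
  have hβ : β =O[atTop] fun k => √(A k) * √(γ k) := .of_norm_le fun k => by
    rw [← Real.sqrt_mul (H.A_nonneg k)]
    exact Real.abs_le_sqrt (H.sq_β_le k)
  refine (isLittleO_mul_sub_mul H.β'_sub_isLittleO H.β'_sub_isLittleO hβ hβ).congr
    (fun k => by ring) fun k => ?_
  rw [mul_mul_mul_comm, Real.mul_self_sqrt (H.A_nonneg k), Real.mul_self_sqrt (H.γ_nonneg k)]

lemma Aγ_isLittleO : (fun k => A k * γ k) =o[atTop] A := by
  simpa only [mul_one] using
    (isBigO_refl A atTop).mul_isLittleO ((isLittleO_one_iff ℝ).2 H.tendsto_γ)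

lemma V_isEquivalent : V ~[atTop] A := by
  have h : (fun k => V k * (γ k / δ)) =o[atTop] V := by
    simpa only [mul_one] using (isBigO_refl V atTop).mul_isLittleO
      ((isLittleO_one_iff ℝ).2 (by simpa using H.tendsto_γ.div_const δ))
  refine IsEquivalent.symm (h.neg_left.congr_left fun k => ?_)
  rw [Pi.sub_apply, ← H.V_mul k]
  ring

lemma V_sub_A_sub_isLittleO :
    (fun k => V k - A k - δ⁻¹ * (A k * γ k)) =o[atTop] fun k => A k * γ k := by
  refine ((H.V_isEquivalent.isLittleO.mul_isBigO (isBigO_refl γ atTop)).const_mul_left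
    δ⁻¹).congr_left fun k => ?_
  rw [Pi.sub_apply, ← H.V_mul k]
  ring

lemma V'_sub_A'_sub_isLittleO :
    (fun k => V' k - A' k - β k ^ 2) =o[atTop] fun k => A k * γ k := by
  have hγ' : Tendsto γ' atTop (𝓝 0) := H.γ'_isEquivalent.symm.tendsto_nhds H.tendsto_γ
  have hinv : (fun k => (1 - γ' k)⁻¹ - 1) =o[atTop] fun _ => (1 : ℝ) := by
    refine (isLittleO_one_iff ℝ).2 ?_
    simpa using ((tendsto_const_nhds (x := (1 : ℝ))).sub hγ').inv₀ (by simp) |>.sub_const 1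
  refine (isLittleO_mul_sub_mul H.sq_β'_sub_isLittleO hinv H.sq_β_isBigO
    (isBigO_refl _ atTop)).congr (fun k => ?_) fun k => mul_one _
  rw [H.V'_eq k, div_eq_mul_inv]
  ring

lemma V'_isEquivalent : V' ~[atTop] A := by
  have := ((H.V'_sub_A'_sub_isLittleO.isBigO.add H.sq_β_isBigO).trans_isLittleO
    H.Aγ_isLittleO).add H.A'_isEquivalent.isLittleO
  refine this.congr_left fun k => ?_
  simp only [Pi.sub_apply]
  ring

lemma V'_pow_isLittleO (hq : q < p) : (fun k => V' k ^ (q + 1)) =o[atTop] N :=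
  ((H.V'_isEquivalent.trans H.V_isEquivalent.symm).isBigO.pow (q + 1)).trans_isLittleO
    (H.V_pow_isLittleO q hq)

lemma γ_mul_pow_nonneg (q k : ℕ) : 0 ≤ γ k * A k ^ q :=
  mul_nonneg (H.γ_nonneg k) (pow_nonneg (H.A_nonneg k) q)

lemma V_pow_sub_pow_isLittleO (q : ℕ) :
    (fun k => V k ^ (q + 1) - A k ^ (q + 1) - (q + 1) / δ * (γ k * A k ^ (q + 1)))
      =o[atTop] fun k => γ k * A k ^ (q + 1) := by
  refine (isLittleO_pow_succ_sub_pow_succ H.V_isEquivalent .refl H.V_sub_A_sub_isLittleO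
    ((isBigO_refl _ atTop).const_mul_left δ⁻¹) q).congr (fun k => ?_) fun k => ?_ <;> ring

lemma V'_pow_sub_pow_isLittleO (q : ℕ) :
    (fun k => V' k ^ (q + 1) - A' k ^ (q + 1) - (q + 1) * (A k ^ q * β k ^ 2))
      =o[atTop] fun k => γ k * A k ^ (q + 1) := by
  refine (isLittleO_pow_succ_sub_pow_succ H.V'_isEquivalent H.A'_isEquivalent
    H.V'_sub_A'_sub_isLittleO H.sq_β_isBigO q).congr (fun k => ?_) fun k => ?_ <;> ring

lemma sqCoeff_sub_isLittleO (q : ℕ) :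
    (fun k => sqCoeff q (A k) (β k) (γ k) - sqCoeff q (A' k) (β' k) (γ' k)) =o[atTop]
      fun k => γ k * A k ^ q := by
  have hpow (i : ℕ) : (fun k => A' k ^ i - A k ^ i) =o[atTop] fun k => A k ^ i :=
    (H.A'_isEquivalent.pow i).isLittleO
  have hfirst : (fun k => A' k ^ q * γ' k - A k ^ q * γ k) =o[atTop] fun k => γ k * A k ^ q :=
    (isLittleO_mul_sub_mul (hpow q) H.γ'_isEquivalent.isLittleO (isBigO_refl _ _)
      (isBigO_refl _ _)).congr_right fun k => mul_comm _ _
  have hsecond : (fun k => 2 * q * (A' k ^ (q - 1) * β' k ^ 2 - A k ^ (q - 1) * β k ^ 2)) =o[atTop]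
      fun k => γ k * A k ^ q := by
    cases q with
    | zero => simp
    | succ q =>
      refine ((isLittleO_mul_sub_mul (hpow q) H.sq_β'_sub_isLittleO (isBigO_refl _ _)
        H.sq_β_isBigO).const_mul_left _).congr_right fun k => ?_
      ring
  refine ((hfirst.add hsecond).const_mul_left (-(q + 1))).congr_left fun k => ?_
  simp only [sqCoeff]
  ring

lemma sum_isBigO (hA : CesaroTendsto N (fun k => γ k * A k ^ q) y) :
    (fun n => ∑ k ∈ range n, γ k * (1 + A k ^ q)) =O[atTop] N := by
  simpa only [mul_add, mul_one] using (H.cesaro_γ.add hA).isBigO H.tendsto_N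

lemma cesaroTendsto_V_pow_sub (hq : q < p) (hA : CesaroTendsto N (fun k => γ k * A k ^ q) y)
    (hc : CesaroTendsto N (fun k => sqCoeff q (A k) (β k) (γ k)) x) :
    CesaroTendsto N (fun k => V k ^ (q + 1) - A k ^ (q + 1)) (σ ^ 2 * x) := by
  refine CesaroTendsto.sub_of_succ_sub H.tendsto_N (H.V_pow_isLittleO q hq)
    ((hc.const_mul (σ ^ 2)).of_isLittleO_sum_sub ?_)
  refine (H.isLittleO_sum q hq (H.sum_isBigO hA)).neg_left.congr_left fun n => ?_
  rw [← sum_neg_distrib]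
  exact sum_congr rfl fun k _ => neg_sub _ _

lemma cesaroTendsto_V'_pow_sub (hq : q < p) (hA : CesaroTendsto N (fun k => γ k * A k ^ q) y)
    (hc : CesaroTendsto N (fun k => sqCoeff q (A k) (β k) (γ k)) x) :
    CesaroTendsto N (fun k => V' k ^ (q + 1) - A' k ^ (q + 1)) (σ ^ 2 * x) := by
  have hc' := hc.of_sub_isLittleO H.tendsto_N (H.γ_mul_pow_nonneg q) (H.sqCoeff_sub_isLittleO q) hA
  refine CesaroTendsto.sub_of_succ_sub H.tendsto_N (H.V'_pow_isLittleO hq)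
    ((hc'.const_mul (σ ^ 2)).of_isLittleO_sum_sub ?_)
  refine (H.isLittleO_sum' q hq (H.sum_isBigO hA)).neg_left.congr_left fun n => ?_
  rw [← sum_neg_distrib]
  exact sum_congr rfl fun k _ => neg_sub _ _

lemma A_le_V (hδ : 0 ≤ δ) (k : ℕ) : A k ≤ V k := by
  rw [← H.V_mul k]
  exact mul_le_of_le_one_right (H.V_nonneg k) (sub_le_self 1 (div_nonneg (H.γ_nonneg k) hδ))

lemma cesaroTendsto_γ_mul_pow_succ (hδ : 0 < δ)
    (h : CesaroTendsto N (fun k => V k ^ (q + 1) - A k ^ (q + 1)) x) :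
    CesaroTendsto N (fun k => γ k * A k ^ (q + 1)) (δ / (q + 1) * x) := by
  have hq : (q : ℝ) + 1 ≠ 0 := q.cast_add_one_ne_zero
  have hequiv : (fun k => V k ^ (q + 1) - A k ^ (q + 1)) ~[atTop]
      fun k => (q + 1) / δ * (γ k * A k ^ (q + 1)) :=
    (isLittleO_const_mul_right_iff (div_ne_zero hq hδ.ne')).2 (H.V_pow_sub_pow_isLittleO q)
  have hnonneg (k : ℕ) : 0 ≤ V k ^ (q + 1) - A k ^ (q + 1) :=
    sub_nonneg.2 (pow_le_pow_left₀ (H.A_nonneg k) (H.A_le_V hδ.le k) _)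
  have hlim := (h.of_sub_isLittleO H.tendsto_N hnonneg
    (hequiv.isLittleO.trans_isBigO hequiv.isBigO_symm) h).const_mul (δ / (q + 1))
  simpa only [← mul_assoc, div_mul_div_cancel₀ hq, div_self hδ.ne', one_mul] using hlim

lemma cesaroTendsto_pow_mul_sq (hA : CesaroTendsto N (fun k => γ k * A k ^ (q + 1)) y)
    (h : CesaroTendsto N (fun k => V' k ^ (q + 1) - A' k ^ (q + 1)) x) :
    CesaroTendsto N (fun k => A k ^ q * β k ^ 2) (x / (q + 1)) := by
  have hlim := (h.of_sub_isLittleO H.tendsto_N (H.γ_mul_pow_nonneg (q + 1))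
    (H.V'_pow_sub_pow_isLittleO q) hA).const_mul ((q : ℝ) + 1)⁻¹
  simpa only [inv_mul_cancel_left₀ (q.cast_add_one_ne_zero : (q : ℝ) + 1 ≠ 0),
    ← div_eq_inv_mul] using hlim

lemma exists_cesaroTendsto_pow (hδ : 0 < δ) (hq : q ≤ p) :
    (∃ y, CesaroTendsto N (fun k => γ k * A k ^ q) y) ∧
      CesaroTendsto N (fun k => sqCoeff q (A k) (β k) (γ k))
        ((q + 1) * (δ * σ ^ (2 * q) * ∏ j ∈ Icc 1 q, (δ + 2 * (j : ℝ)))) := by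
  induction q with
  | zero => exact ⟨⟨δ, by simpa using H.cesaro_γ⟩, by simpa [sqCoeff] using H.cesaro_γ⟩
  | succ q ih =>
    obtain ⟨⟨y, hA⟩, hc⟩ := ih (by omega)
    have hA' := H.cesaroTendsto_γ_mul_pow_succ hδ (H.cesaroTendsto_V_pow_sub hq hA hc)
    have hβ := H.cesaroTendsto_pow_mul_sq hA' (H.cesaroTendsto_V'_pow_sub hq hA hc)
    refine ⟨⟨_, hA'⟩, ?_⟩
    convert (hA'.add (hβ.const_mul (2 * (q + 1)))).const_mul ((q : ℝ) + 2) using 1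
    · ext k
      simp only [sqCoeff, Nat.add_sub_cancel]
      push_cast
      ring
    · rw [prod_Icc_succ_top (by omega)]
      push_cast
      field_simp
      ring

theorem cesaroTendsto (hδ : 0 < δ) (hp : 1 ≤ p) :
    CesaroTendsto N (fun k => V' k ^ p - A' k ^ p)
      (p * (δ * σ ^ (2 * p) * ∏ j ∈ Icc 1 (p - 1), (δ + 2 * (j : ℝ)))) := by
  obtain ⟨q, rfl⟩ : ∃ q, p = q + 1 := ⟨p - 1, by omega⟩
  obtain ⟨⟨y, hA⟩, hc⟩ := H.exists_cesaroTendsto_pow hδ q.le_succ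
  convert H.cesaroTendsto_V'_pow_sub q.lt_succ_self hA hc using 1
  rw [Nat.add_sub_cancel]
  push_cast
  ring

end IsApproximatedPath

end PathwiseInduction

section Perturbation

open Asymptotics

lemma isLittleO_rpow_comp {ι : Type*} {l : Filter ι} {N : ι → ℝ} {s t : ℝ} (hst : s < t)
    (hN : Tendsto N l atTop) : (fun k => N k ^ s) =o[l] fun k => N k ^ t := by
  have hpos : ∀ᶠ k in l, 0 < N k := hN.eventually_gt_atTop 0
  refine (isLittleO_iff_tendsto' (hpos.mono fun k hk h => ?_)).2 ?_
  · exact absurd h (Real.rpow_pos_of_pos hk t).ne'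
  · refine ((tendsto_rpow_neg_atTop (sub_pos.2 hst)).comp hN).congr' (hpos.mono fun k hk => ?_)
    rw [Function.comp_apply, neg_sub, Real.rpow_sub hk]

lemma pow_isLittleO_of_rpow_le {V N : ℕ → ℝ} {b κ K : ℝ} {p : ℕ} (hb : 0 < b) (hκ : κ < b)
    (hV : ∀ k, 0 ≤ V k) (hN1 : ∀ k, 1 ≤ N k) (hN : Tendsto N atTop atTop)
    (h : ∀ k, V k ^ (b * p) ≤ K * N k ^ κ) : (fun k => V k ^ p) =o[atTop] N := by
  have hN0 (k : ℕ) : 0 ≤ N k := zero_le_one.trans (hN1 k)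
  have hO : (fun k => V k ^ (b * p)) =O[atTop] fun k => N k ^ κ :=
    .of_bound K (.of_forall fun k => by
      rw [Real.norm_of_nonneg (Real.rpow_nonneg (hV k) _),
        Real.norm_of_nonneg (Real.rpow_nonneg (hN0 k) _)]
      exact h k)
  refine ((hO.trans_isLittleO (isLittleO_rpow_comp hκ hN)).rpow (inv_pos.2 hb)
    (.of_forall fun k => Real.rpow_nonneg (hN0 k) b)).congr (fun k => ?_) fun k => ?_
  · rw [← Real.rpow_mul (hV k), mul_right_comm, mul_inv_cancel₀ hb.ne', one_mul, Real.rpow_natCast]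
  · exact Real.rpow_rpow_inv (hN0 k) hb.ne'

lemma one_add_rpow_le {y b : ℝ} (hy : 0 ≤ y) (hb : 0 ≤ b) : (1 + y) ^ b ≤ 2 ^ b * (1 + y ^ b) := by
  have hmax : 1 + y ≤ 2 * max 1 y := by linarith [le_max_left 1 y, le_max_right 1 y]
  calc (1 + y) ^ b ≤ (2 * max 1 y) ^ b := Real.rpow_le_rpow (by positivity) hmax hb
    _ = 2 ^ b * max 1 y ^ b := Real.mul_rpow zero_le_two (by positivity)
    _ ≤ 2 ^ b * (1 + y ^ b) := by
        gcongr
        rcases le_total 1 y with h | h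
        · rw [max_eq_right h]; linarith
        · rw [max_eq_left h, Real.one_rpow]; linarith [Real.rpow_nonneg hy b]

lemma sqrt_pow_two_mul {x : ℝ} (hx : 0 ≤ x) (n : ℕ) : √x ^ (2 * n) = x ^ n := by
  rw [pow_mul, Real.sq_sqrt hx]

variable {Ω : Type*} {m0 : MeasurableSpace Ω} {μ : Measure Ω} {F : Filtration ℕ m0}
  {e T V A β γ V' A' β' γ' : ℕ → Ω → ℝ} {σ a b κ δ : ℝ} {p : ℕ} {ω : Ω}

namespace IsModelSystem

lemma sub_logClock_isEquivalent (H : IsModelSystem F e T V A β γ δ)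
    (hγ : Tendsto (fun k => γ k ω) atTop (𝓝 0)) :
    (fun k => δ * (logClock T (k + 1) ω - logClock T k ω)) ~[atTop] fun k => γ k ω := by
  have hδ := H.δ_pos.ne'
  have hx : Tendsto (fun k => -(γ k ω / δ)) atTop (𝓝 0) := by simpa using (hγ.div_const δ).neg
  have hlog := ((hasDerivAt_iff_isLittleO_nhds_zero.1
    (Real.hasDerivAt_log one_ne_zero)).comp_tendsto hx).const_mul_left (-δ)
  have hT (k : ℕ) : 1 + -(γ k ω / δ) = T k ω / T (k + 1) ω := by
    rw [H.γ_eq, mul_div_cancel_left₀ _ hδ]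
    ring
  refine (hlog.trans_isBigO ?_).congr_left fun k => ?_
  · exact (isBigO_refl _ _).neg_left.trans
      (((isBigO_refl (fun k => γ k ω) atTop).const_mul_left δ⁻¹).congr_left fun k =>
        inv_mul_eq_div _ _)
  · simp only [Function.comp_apply, Pi.sub_apply, hT, Real.log_one,
      Real.log_div (H.T_pos k ω).ne' (H.T_pos (k + 1) ω).ne', logClock, smul_eq_mul]
    field_simp
    ring

lemma cesaroTendsto_γ (H : IsModelSystem F e T V A β γ δ)
    (hN : Tendsto (fun k => logClock T k ω) atTop atTop)
    (hγ : Tendsto (fun k => γ k ω) atTop (𝓝 0)) :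
    CesaroTendsto (fun k => logClock T k ω) (fun k => γ k ω) δ := by
  have hincr (k : ℕ) : 0 ≤ δ * (logClock T (k + 1) ω - logClock T k ω) :=
    mul_nonneg H.δ_pos.le (sub_nonneg.2 (H.logClock_mono ω k.le_succ))
  have htel : CesaroTendsto (fun k => logClock T k ω)
      (fun k => δ * (logClock T (k + 1) ω - logClock T k ω)) δ := by
    have hlim : Tendsto (fun n => δ * (1 - 1 / logClock T n ω)) atTop (𝓝 (δ * (1 - 0))) :=
      ((tendsto_const_nhds.div_atTop hN).const_sub 1).const_mul δ
    rw [sub_zero, mul_one] at hlim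
    refine hlim.congr fun n => ?_
    have hn : logClock T n ω ≠ 0 := (one_pos.trans_le (H.one_le_logClock n ω)).ne'
    have h0 : logClock T 0 ω = 1 := by rw [logClock, H.T_zero, Real.log_one, add_zero]
    rw [← mul_sum, sum_range_sub (fun k => logClock T k ω), h0]
    field_simp
  exact htel.of_sub_isLittleO hN hincr (H.sub_logClock_isEquivalent hγ).symm.isLittleO.symm htel

lemma A_le_V (H : IsModelSystem F e T V A β γ δ) (k : ℕ) (ω : Ω) : A k ω ≤ V k ω :=
  (le_mul_of_one_le_right (H.A_nonneg k ω)
    (le_add_of_nonneg_right (div_nonneg (H.γ_nonneg k ω) H.δ_pos.le))).trans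
    (H.A_mul_one_add_le_V k ω)

lemma V_pow_isLittleO [IsProbabilityMeasure μ] (H : IsModelSystem F e T V A β γ δ)
    (he : IsNoise μ F e σ a) (hp : 1 ≤ p) (hb : 1 < b) (hpa : 2 * p * b ≤ a)
    (hT : ∀ᵐ ω ∂μ, Tendsto (fun k => T k ω) atTop atTop) :
    ∀ᵐ ω ∂μ, (fun k => V k ω ^ p) =o[atTop] fun k => logClock T k ω := by
  have hp' : (1 : ℝ) ≤ p := by exact_mod_cast hp
  filter_upwards [(H.isClock hT).tendsto,
    H.ae_summable_and_V_rpow_le (r := b * p) (κ := (1 + b) / 2) he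
      (one_le_mul_of_one_le_of_one_le hb.le hp') (by linarith) (by linarith)]
    with ω hN ⟨_, K, hK⟩
  exact pow_isLittleO_of_rpow_le (one_pos.trans hb) (by linarith) (H.V_nonneg · ω)
    (H.one_le_logClock · ω) hN hK

lemma summable_envelope [IsProbabilityMeasure μ] (H : IsModelSystem F e T V A β γ δ)
    (he : IsNoise μ F e σ a) (hp : 1 ≤ p) (hb : 1 < b) (hpa : 2 * p * b ≤ a) :
    ∀ᵐ ω ∂μ, Summable fun k => γ k ω * ((1 + A k ω ^ p) / logClock T (k + 1) ω) ^ b := by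
  have hp' : (1 : ℝ) ≤ p := by exact_mod_cast hp
  filter_upwards [H.ae_summable_and_V_rpow_le (r := b * p) he
    (one_le_mul_of_one_le_of_one_le hb.le hp') (by linarith) hb] with ω ⟨hsum, _⟩
  refine (hsum.mul_left (2 ^ b)).of_nonneg_of_le (fun k => ?_) fun k => ?_ <;>
    have hA := H.A_nonneg k ω <;> have hγ := H.γ_nonneg k ω <;>
    have hN : 0 < logClock T (k + 1) ω := one_pos.trans_le (H.one_le_logClock _ ω)
  · positivity
  · have hpow : A k ω ^ (b * p) = (A k ω ^ p) ^ b := by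
      rw [mul_comm, Real.rpow_mul hA, Real.rpow_natCast]
    have hbound := one_add_rpow_le (pow_nonneg hA p) (zero_le_one.trans hb.le)
    calc γ k ω * ((1 + A k ω ^ p) / logClock T (k + 1) ω) ^ b
        = γ k ω * (1 + A k ω ^ p) ^ b * logClock T (k + 1) ω ^ (-b) := by
          rw [Real.div_rpow (by positivity) hN.le, Real.rpow_neg hN.le]
          ring
      _ ≤ γ k ω * (2 ^ b * (1 + (A k ω ^ p) ^ b)) * logClock T (k + 1) ω ^ (-b) := by gcongr
      _ = 2 ^ b * (γ k ω * (1 + A k ω ^ (b * p)) * logClock T (k + 1) ω ^ (-b)) := by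
          rw [hpow]
          ring

lemma isEnvelope [IsProbabilityMeasure μ] (H : IsModelSystem F e T V A β γ δ)
    (he : IsNoise μ F e σ a) (hp : 1 ≤ p) (hb : 1 < b) (hpa : 2 * p * b ≤ a)
    (hT : ∀ᵐ ω ∂μ, Tendsto (fun k => T k ω) atTop atTop)
    (hγ : ∀ᵐ ω ∂μ, Tendsto (fun k => γ k ω) atTop (𝓝 0)) :
    IsEnvelope μ F (logClock T) (fun k ω => √(A k ω)) (fun k ω => √(γ k ω)) p b where
  measurable_X k := (H.measurable_A k).sqrt
  measurable_W k := (H.measurable_γ k).sqrt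
  X_nonneg _ _ := Real.sqrt_nonneg _
  W_nonneg _ _ := Real.sqrt_nonneg _
  W_tendsto := hγ.mono fun _ h => by simpa only [Real.sqrt_zero] using h.sqrt
  isBigO := by
    filter_upwards [H.V_pow_isLittleO he hp hb hpa hT] with ω hV
    have hN (k : ℕ) : 0 ≤ logClock T k ω := zero_le_one.trans (H.one_le_logClock k ω)
    have hone : (fun _ : ℕ => (1 : ℝ)) =O[atTop] fun k => logClock T k ω := .of_norm_le fun k => by
      rw [norm_one]
      exact H.one_le_logClock k ω
    have hA : (fun k => √(A k ω) ^ (2 * p)) =O[atTop] fun k => V k ω ^ p := .of_norm_le fun k => by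
      rw [sqrt_pow_two_mul (H.A_nonneg k ω), Real.norm_of_nonneg (pow_nonneg (H.A_nonneg k ω) p)]
      exact pow_le_pow_left₀ (H.A_nonneg k ω) (H.A_le_V k ω) p
    refine (hone.add (hA.trans hV.isBigO)).trans (.of_norm_le fun k => ?_)
    rw [Real.norm_of_nonneg (hN k)]
    exact H.logClock_mono ω k.le_succ
  summable := by
    filter_upwards [H.summable_envelope he hp hb hpa] with ω h
    simpa only [Real.sq_sqrt (H.γ_nonneg _ ω), sqrt_pow_two_mul (H.A_nonneg _ ω)] using h

lemma isEnveloped (H : IsModelSystem F e T V A β γ δ) :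
    IsEnveloped μ F (fun k ω => √(A k ω)) (fun k ω => √(γ k ω)) A β γ where
  measurable_A := H.measurable_A
  measurable_β := H.measurable_β
  measurable_γ := H.measurable_γ
  A_isBigO := .of_forall fun ω => by
    simpa only [Real.sq_sqrt (H.A_nonneg _ ω)] using isBigO_refl _ _
  β_isBigO := .of_forall fun ω => .of_norm_le fun k => by
    rw [← Real.sqrt_mul (H.A_nonneg k ω)]
    exact Real.abs_le_sqrt (H.sq_β_le k ω)
  γ_isBigO := .of_forall fun ω => by
    simpa only [Real.sq_sqrt (H.γ_nonneg _ ω)] using isBigO_refl _ _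

end IsModelSystem

/-- A recursion driven by the same noise as a model system and whose predictable coefficients are
asymptotic to those of the model. In the application `V' k = M_kᵗ S_{k-1}⁻¹ M_k`,
`A' k = M_kᵗ S_k⁻¹ M_k`, `β' k = Φ_kᵗ S_k⁻¹ M_k` and `γ' k = f_k`. -/
structure IsPerturbation (μ : Measure Ω) (F : Filtration ℕ m0) (e A β γ V' A' β' γ' : ℕ → Ω → ℝ) :
    Prop where
  measurable_A' : ∀ k, Measurable[F k] (A' k)
  measurable_β' : ∀ k, Measurable[F k] (β' k)
  measurable_γ' : ∀ k, Measurable[F k] (γ' k)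
  V'_eq : ∀ k ω, V' k ω = A' k ω + β' k ω ^ 2 / (1 - γ' k ω)
  V'_succ : ∀ k ω, V' (k + 1) ω = A' k ω + 2 * e k ω * β' k ω + e k ω ^ 2 * γ' k ω
  A'_isEquivalent : ∀ᵐ ω ∂μ, (fun k => A' k ω) ~[atTop] fun k => A k ω
  γ'_isEquivalent : ∀ᵐ ω ∂μ, (fun k => γ' k ω) ~[atTop] fun k => γ k ω
  β'_sub_isLittleO : ∀ᵐ ω ∂μ,
    (fun k => β' k ω - β k ω) =o[atTop] fun k => √(A k ω) * √(γ k ω)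

namespace IsPerturbation

lemma isEnveloped (H' : IsPerturbation μ F e A β γ V' A' β' γ')
    (H : IsModelSystem F e T V A β γ δ) :
    IsEnveloped μ F (fun k ω => √(A k ω)) (fun k ω => √(γ k ω)) A' β' γ' where
  measurable_A := H'.measurable_A'
  measurable_β := H'.measurable_β'
  measurable_γ := H'.measurable_γ'
  A_isBigO := by
    filter_upwards [H'.A'_isEquivalent, H.isEnveloped.A_isBigO] with ω hA' hA
    exact hA'.isBigO.trans hA
  β_isBigO := by
    filter_upwards [H'.β'_sub_isLittleO, H.isEnveloped.β_isBigO] with ω hβ' hβ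
    exact (hβ'.isBigO.add hβ).congr_left fun k => sub_add_cancel _ _
  γ_isBigO := by
    filter_upwards [H'.γ'_isEquivalent, H.isEnveloped.γ_isBigO] with ω hγ' hγ
    exact hγ'.isBigO.trans hγ

lemma isApproximatedPath [IsProbabilityMeasure μ] (H' : IsPerturbation μ F e A β γ V' A' β' γ')
    (H : IsModelSystem F e T V A β γ δ) (he : IsNoise μ F e σ a) (hp : 1 ≤ p) (hb : 1 < b)
    (hb2 : b ≤ 2) (hpa : 2 * p * b ≤ a) (hT : ∀ᵐ ω ∂μ, Tendsto (fun k => T k ω) atTop atTop)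
    (hγ : ∀ᵐ ω ∂μ, Tendsto (fun k => γ k ω) atTop (𝓝 0)) :
    ∀ᵐ ω ∂μ, IsApproximatedPath (logClock T · ω) (V · ω) (A · ω) (β · ω) (γ · ω) (V' · ω) (A' · ω)
      (β' · ω) (γ' · ω) δ σ p := by
  have hN := H.isClock hT
  have hE := H.isEnvelope he hp hb hpa hT hγ
  have hsum := ae_all_iff.2 fun q => ae_all_iff.2 fun hq : q < p =>
    he.isLittleO_sum_sub_sqCoeff hN hE H.isEnveloped hb hb2 hpa hq
  have hsum' := ae_all_iff.2 fun q => ae_all_iff.2 fun hq : q < p =>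
    he.isLittleO_sum_sub_sqCoeff hN hE (H'.isEnveloped H) hb hb2 hpa hq
  filter_upwards [hN.tendsto, hγ, H'.A'_isEquivalent, H'.γ'_isEquivalent, H'.β'_sub_isLittleO,
    H.V_pow_isLittleO he hp hb hpa hT, hsum, hsum'] with ω hNω hγω hA' hγ' hβ' hV hsum hsum'
  simp only [Real.sq_sqrt (H.γ_nonneg _ ω), sqrt_pow_two_mul (H.A_nonneg _ ω), ← H.V_succ,
    ← H'.V'_succ] at hsum hsum'
  exact
    { tendsto_N := hNω
      A_nonneg := (H.A_nonneg · ω)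
      γ_nonneg := (H.γ_nonneg · ω)
      V_nonneg := (H.V_nonneg · ω)
      sq_β_le := (H.sq_β_le · ω)
      V_mul := fun k => by
        rw [H.γ_eq, mul_div_cancel_left₀ _ H.δ_pos.ne', sub_sub_cancel, ← mul_div_assoc,
          H.V_mul_T, mul_div_cancel_right₀ _ (H.T_pos _ ω).ne']
      tendsto_γ := hγω
      cesaro_γ := H.cesaroTendsto_γ hNω hγω
      V'_eq := (H'.V'_eq · ω)
      A'_isEquivalent := hA'
      γ'_isEquivalent := hγ'
      β'_sub_isLittleO := hβ'
      V_pow_isLittleO := fun q hq => by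
        have hone : (fun _ : ℕ => (1 : ℝ)) =o[atTop] fun k => logClock T k ω :=
          isLittleO_const_left.2 (.inr (tendsto_norm_atTop_atTop.comp hNω))
        refine IsBigO.trans_isLittleO (.of_norm_le fun k => ?_) (hone.add hV)
        rw [Real.norm_of_nonneg (pow_nonneg (H.V_nonneg k ω) _)]
        exact pow_le_one_add_pow (H.V_nonneg k ω) hq
      isLittleO_sum := hsum
      isLittleO_sum' := hsum' }

theorem cesaroTendsto [IsProbabilityMeasure μ] (H' : IsPerturbation μ F e A β γ V' A' β' γ')
    (H : IsModelSystem F e T V A β γ δ) (he : IsNoise μ F e σ a) (hp : 1 ≤ p) (hpa : 2 * p < a)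
    (hT : ∀ᵐ ω ∂μ, Tendsto (fun k => T k ω) atTop atTop)
    (hγ' : ∀ᵐ ω ∂μ, Tendsto (fun k => γ' k ω) atTop (𝓝 0)) :
    ∀ᵐ ω ∂μ, CesaroTendsto (logClock T · ω) (fun k => V' k ω ^ p - A' k ω ^ p)
      (p * (δ * σ ^ (2 * p) * ∏ j ∈ Icc 1 (p - 1), (δ + 2 * (j : ℝ)))) := by
  have hp0 : (0 : ℝ) < 2 * p := by positivity
  have hb : 1 < min 2 (a / (2 * p)) := lt_min one_lt_two ((one_lt_div hp0).2 hpa)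
  have hba : 2 * p * min 2 (a / (2 * p)) ≤ a :=
    (mul_le_mul_of_nonneg_left (min_le_right _ _) hp0.le).trans_eq (mul_div_cancel₀ a hp0.ne')
  have hγ : ∀ᵐ ω ∂μ, Tendsto (fun k => γ k ω) atTop (𝓝 0) := by
    filter_upwards [H'.γ'_isEquivalent, hγ'] with ω h hω
    exact h.tendsto_nhds hω
  filter_upwards [H'.isApproximatedPath H he hp hb (min_le_left _ _) hba hT hγ] with ω hω
  exact hω.cesaroTendsto H.δ_pos hp

end IsPerturbation

end Perturbation

section QuadraticForm

open Asymptotics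

variable {n : Type*} [Fintype n] {Q : Matrix n n ℝ}

lemma dotProduct_mulVec_comm (hQ : Q.IsHermitian) (x y : n → ℝ) :
    x ⬝ᵥ Q *ᵥ y = y ⬝ᵥ Q *ᵥ x := by
  have hQt : Qᵀ = Q := by rwa [IsHermitian, conjTranspose_eq_transpose_of_trivial] at hQ
  rw [dotProduct_mulVec, dotProduct_comm, ← mulVec_transpose, hQt]

lemma dotProduct_mulVec_self_nonneg (hQ : Q.PosSemidef) (x : n → ℝ) : 0 ≤ x ⬝ᵥ Q *ᵥ x := by
  simpa only [star_trivial] using hQ.dotProduct_mulVec_nonneg x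

lemma dotProduct_mulVec_add_smul_self (hQ : Q.IsHermitian) (x y : n → ℝ) (e : ℝ) :
    (x + e • y) ⬝ᵥ Q *ᵥ (x + e • y) =
      x ⬝ᵥ Q *ᵥ x + 2 * e * (y ⬝ᵥ Q *ᵥ x) + e ^ 2 * (y ⬝ᵥ Q *ᵥ y) := by
  simp only [mulVec_add, mulVec_smul, add_dotProduct, dotProduct_add, smul_dotProduct,
    dotProduct_smul, smul_eq_mul, dotProduct_mulVec_comm hQ x y]
  ring

lemma sq_dotProduct_mulVec_le (hQ : Q.PosSemidef) (x y : n → ℝ) :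
    (x ⬝ᵥ Q *ᵥ y) ^ 2 ≤ (x ⬝ᵥ Q *ᵥ x) * (y ⬝ᵥ Q *ᵥ y) := by
  have hdiscrim := discrim_le_zero (a := x ⬝ᵥ Q *ᵥ x) (b := 2 * (x ⬝ᵥ Q *ᵥ y))
    (c := y ⬝ᵥ Q *ᵥ y) fun t => by
      linarith [dotProduct_mulVec_self_nonneg hQ (y + t • x),
        dotProduct_mulVec_add_smul_self hQ.isHermitian y x t]
  rw [discrim] at hdiscrim
  linarith

lemma abs_apply_le_sqrt_mul_sqrt_dotProduct [DecidableEq n] (hQ : Q.PosDef) (x : n → ℝ) (i : n) :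
    |x i| ≤ √(Q⁻¹ i i) * √(x ⬝ᵥ Q *ᵥ x) := by
  have hdet : IsUnit Q.det := (isUnit_iff_isUnit_det _).1 hQ.isUnit
  have hinv : Q⁻¹ *ᵥ Q *ᵥ x = x := by rw [mulVec_mulVec, nonsing_inv_mul _ hdet, one_mulVec]
  have hcs := sq_dotProduct_mulVec_le hQ.inv.posSemidef (Pi.single i 1) (Q *ᵥ x)
  rw [hinv, single_one_dotProduct, single_one_dotProduct, mulVec_single_one, col_apply,
    dotProduct_comm (Q *ᵥ x)] at hcs
  rw [← Real.sqrt_mul hQ.inv.diag_pos.le]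
  exact Real.abs_le_sqrt hcs

variable {ι : Type*} {l : Filter ι}

lemma isLittleO_dotProduct_mulVec (hQ : Q.PosDef) {D : ι → Matrix n n ℝ}
    (hD : Tendsto D l (𝓝 0)) (x y : ι → n → ℝ) :
    (fun k => x k ⬝ᵥ D k *ᵥ y k) =o[l]
      fun k => √(x k ⬝ᵥ Q *ᵥ x k) * √(y k ⬝ᵥ Q *ᵥ y k) := by
  classical
  have happly (z : ι → n → ℝ) (i : n) :
      (fun k => z k i) =O[l] fun k => √(z k ⬝ᵥ Q *ᵥ z k) :=
    IsBigO.of_bound (√(Q⁻¹ i i)) <| Eventually.of_forall fun k => by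
      simpa only [Real.norm_eq_abs, abs_of_nonneg (Real.sqrt_nonneg _)] using
        abs_apply_le_sqrt_mul_sqrt_dotProduct hQ (z k) i
  have hentry (i j : n) : (fun k => D k i j) =o[l] fun _ => (1 : ℝ) :=
    (isLittleO_one_iff ℝ).2 (by simpa using (hD.apply_nhds i).apply_nhds j)
  have hexpand :
      (fun k => x k ⬝ᵥ D k *ᵥ y k) = ∑ i, ∑ j, fun k => x k i * (D k i j * y k j) := by
    ext k
    simp only [dotProduct, mulVec, mul_sum, Finset.sum_apply]
  have hterm (i j : n) : (fun k => x k i * (D k i j * y k j)) =o[l]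
      fun k => √(x k ⬝ᵥ Q *ᵥ x k) * √(y k ⬝ᵥ Q *ᵥ y k) := by
    simpa only [one_mul] using (happly x i).mul_isLittleO ((hentry i j).mul_isBigO (happly y j))
  rw [hexpand]
  exact IsLittleO.sum fun i _ => IsLittleO.sum fun j _ => hterm i j

variable [DecidableEq n]

lemma inv_smul_of_isUnit_det {P : Matrix n n ℝ} (hP : IsUnit P.det) {t : ℝ} (ht : t ≠ 0) :
    (t⁻¹ • P)⁻¹ = t • P⁻¹ := by
  refine inv_eq_right_inv ?_
  rw [smul_mul_smul_comm, mul_nonsing_inv _ hP, inv_mul_cancel₀ ht, one_smul]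

lemma dotProduct_inv_mulVec_sub_isLittleO {L : Matrix n n ℝ} (hL : L.PosDef)
    {P : ι → Matrix n n ℝ} (hP : ∀ k, IsUnit (P k).det) {t : ι → ℝ} (ht : ∀ k, 0 < t k)
    (h : Tendsto (fun k => (t k)⁻¹ • P k) l (𝓝 L)) (x y : ι → n → ℝ) :
    (fun k => x k ⬝ᵥ (P k)⁻¹ *ᵥ y k - x k ⬝ᵥ L⁻¹ *ᵥ y k / t k) =o[l]
      fun k => √(x k ⬝ᵥ L⁻¹ *ᵥ x k / t k) * √(y k ⬝ᵥ L⁻¹ *ᵥ y k / t k) := by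
  have hinv : ContinuousAt Inv.inv L := continuousAt_matrix_inv L <| by
    simpa only [Ring.inverse_eq_inv'] using continuousAt_inv₀ hL.det_pos.ne'
  have hsub : Tendsto (fun k => t k • (P k)⁻¹ - L⁻¹) l (𝓝 0) := by
    simpa only [Function.comp_def, inv_smul_of_isUnit_det (hP _) (ht _).ne', sub_self] using
      (hinv.tendsto.comp h).sub_const L⁻¹
  refine ((isLittleO_dotProduct_mulVec hL.inv hsub x y).mul_isBigO
    (isBigO_refl (fun k => (t k)⁻¹) l)).congr (fun k => ?_) fun k => ?_
  · have := (ht k).ne'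
    rw [sub_mulVec, smul_mulVec, dotProduct_sub, dotProduct_smul, smul_eq_mul]
    field_simp
  · rw [Real.sqrt_div' _ (ht k).le, Real.sqrt_div' _ (ht k).le, div_mul_div_comm,
      Real.mul_self_sqrt (ht k).le, div_eq_mul_inv]

lemma dotProduct_inv_mulVec_self_isEquivalent {L : Matrix n n ℝ} (hL : L.PosDef)
    {P : ι → Matrix n n ℝ} (hP : ∀ k, IsUnit (P k).det) {t : ι → ℝ} (ht : ∀ k, 0 < t k)
    (h : Tendsto (fun k => (t k)⁻¹ • P k) l (𝓝 L)) (x : ι → n → ℝ) :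
    (fun k => x k ⬝ᵥ (P k)⁻¹ *ᵥ x k) ~[l] fun k => x k ⬝ᵥ L⁻¹ *ᵥ x k / t k :=
  (dotProduct_inv_mulVec_sub_isLittleO hL hP ht h x x).congr_right fun k =>
    Real.mul_self_sqrt <|
      div_nonneg (dotProduct_mulVec_self_nonneg hL.inv.posSemidef _) (ht k).le

lemma tendsto_log_det_div_one_add_log {L : Matrix n n ℝ} (hL : L.PosDef)
    {P : ι → Matrix n n ℝ} (hP : ∀ k, 0 < (P k).det) {t : ι → ℝ} (ht : ∀ k, 0 < t k)
    (htt : Tendsto t l atTop) (h : Tendsto (fun k => (t k)⁻¹ • P k) l (𝓝 L)) :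
    Tendsto (fun k => Real.log (P k).det / (1 + Real.log (t k))) l (𝓝 (Fintype.card n)) := by
  have hdet : Tendsto (fun k => Real.log ((t k)⁻¹ • P k).det) l (𝓝 (Real.log L.det)) :=
    ((continuous_id.matrix_det.tendsto L).comp h).log hL.det_pos.ne'
  have hlog : Tendsto (fun k => 1 + Real.log (t k)) l atTop :=
    tendsto_atTop_add_const_left _ _ (Real.tendsto_log_atTop.comp htt)
  have hlim := ((hdet.sub_const (Fintype.card n : ℝ)).div_atTop hlog).const_add
    (Fintype.card n : ℝ)
  rw [add_zero] at hlim
  refine hlim.congr' ?_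
  filter_upwards [hlog.eventually_gt_atTop 0] with k hk
  rw [det_smul, Real.log_mul (pow_pos (inv_pos.2 (ht k)) _).ne' (hP k).ne', Real.log_pow,
    Real.log_inv]
  field_simp
  ring

end QuadraticForm

section RankOneUpdate

variable {n : Type*} {P : Matrix n n ℝ} (u : n → ℝ)

lemma posDef_add_vecMulVec_self [Finite n] (hP : P.PosDef) : (P + vecMulVec u u).PosDef :=
  hP.add_posSemidef (by simpa only [star_trivial] using posSemidef_vecMulVec_self_star u)

variable [Fintype n]

lemma add_vecMulVec_mulVec (v : n → ℝ) :
    (P + vecMulVec u u) *ᵥ v = P *ᵥ v + (u ⬝ᵥ v) • u := by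
  rw [add_mulVec, vecMulVec_mulVec, op_smul_eq_smul]

variable [DecidableEq n]

lemma dotProduct_inv_add_vecMulVec_lt_one (hP : P.PosDef) :
    u ⬝ᵥ (P + vecMulVec u u)⁻¹ *ᵥ u < 1 := by
  set w := (P + vecMulVec u u)⁻¹ *ᵥ u with hw
  rcases eq_or_ne w 0 with hw0 | hw0
  · simp [hw0]
  have hdet : IsUnit (P + vecMulVec u u).det :=
    (isUnit_iff_isUnit_det _).1 (posDef_add_vecMulVec_self u hP).isUnit
  have hpos : 0 < w ⬝ᵥ P *ᵥ w := by
    simpa only [star_trivial] using hP.dotProduct_mulVec_pos hw0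
  have hsolve : P *ᵥ w + (u ⬝ᵥ w) • u = u := by
    rw [← add_vecMulVec_mulVec, hw, mulVec_mulVec, mul_nonsing_inv _ hdet, one_mulVec]
  have hself : w ⬝ᵥ P *ᵥ w + (u ⬝ᵥ w) * (u ⬝ᵥ w) = u ⬝ᵥ w := by
    simpa [dotProduct_add, dotProduct_comm w u] using congrArg (w ⬝ᵥ ·) hsolve
  nlinarith

/-- **Sherman–Morrison formula**, as an identity of quadratic forms. -/
lemma dotProduct_inv_mulVec_eq_add_div (hP : P.PosDef) (x : n → ℝ) :
    x ⬝ᵥ P⁻¹ *ᵥ x = x ⬝ᵥ (P + vecMulVec u u)⁻¹ *ᵥ x +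
      (u ⬝ᵥ (P + vecMulVec u u)⁻¹ *ᵥ x) ^ 2 / (1 - u ⬝ᵥ (P + vecMulVec u u)⁻¹ *ᵥ u) := by
  have hlt := dotProduct_inv_add_vecMulVec_lt_one u hP
  have hR := posDef_add_vecMulVec_self u hP
  set R := P + vecMulVec u u with hRdef
  have hRdet : IsUnit R.det := (isUnit_iff_isUnit_det _).1 hR.isUnit
  have hPdet : IsUnit P.det := (isUnit_iff_isUnit_det _).1 hP.isUnit
  have hne : 1 - u ⬝ᵥ R⁻¹ *ᵥ u ≠ 0 := by linarith
  set c := (u ⬝ᵥ R⁻¹ *ᵥ x) / (1 - u ⬝ᵥ R⁻¹ *ᵥ u) with hc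
  have hPR (v : n → ℝ) : P *ᵥ (R⁻¹ *ᵥ v) = v - (u ⬝ᵥ R⁻¹ *ᵥ v) • u := by
    rw [eq_sub_iff_add_eq, ← add_vecMulVec_mulVec, ← hRdef, mulVec_mulVec,
      mul_nonsing_inv _ hRdet, one_mulVec]
  have hsolve : P *ᵥ (R⁻¹ *ᵥ x + c • (R⁻¹ *ᵥ u)) = x := by
    have hcoef : c - u ⬝ᵥ R⁻¹ *ᵥ x - c * (u ⬝ᵥ R⁻¹ *ᵥ u) = 0 := by
      rw [hc]; field_simp; ring
    rw [mulVec_add, mulVec_smul, hPR, hPR]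
    calc x - (u ⬝ᵥ R⁻¹ *ᵥ x) • u + c • (u - (u ⬝ᵥ R⁻¹ *ᵥ u) • u)
        = x + (c - u ⬝ᵥ R⁻¹ *ᵥ x - c * (u ⬝ᵥ R⁻¹ *ᵥ u)) • u := by module
      _ = x := by rw [hcoef, zero_smul, add_zero]
  have hPinv : P⁻¹ *ᵥ x = R⁻¹ *ᵥ x + c • (R⁻¹ *ᵥ u) := by
    conv_lhs => rw [← hsolve]
    rw [mulVec_mulVec, nonsing_inv_mul _ hPdet, one_mulVec]
  rw [hPinv, dotProduct_add, dotProduct_smul, smul_eq_mul,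
    dotProduct_mulVec_comm hR.inv.isHermitian x u, hc]
  ring

end RankOneUpdate

section Measurability

variable {Ω : Type*} {m : MeasurableSpace Ω} {n : Type*} [Fintype n] {Q : Ω → Matrix n n ℝ}

lemma measurable_matrix_inv_apply [DecidableEq n] (hQ : ∀ i j, Measurable fun ω => Q ω i j)
    (i j : n) : Measurable fun ω => (Q ω)⁻¹ i j := by
  have hQ' : Measurable fun ω i j => Q ω i j :=
    measurable_pi_lambda _ fun i => measurable_pi_lambda _ fun j => hQ i j
  have hof : Continuous fun M : n → n → ℝ => Matrix.of M := continuous_id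
  simp only [Matrix.inv_def, Ring.inverse_eq_inv', Matrix.smul_apply, smul_eq_mul]
  exact (hof.matrix_det.measurable.comp hQ').inv.mul
    ((hof.matrix_adjugate.matrix_elem i j).measurable.comp hQ')

lemma measurable_dotProduct_mulVec {x y : Ω → n → ℝ} (hQ : ∀ i j, Measurable fun ω => Q ω i j)
    (hx : Measurable x) (hy : Measurable y) :
    Measurable fun ω => x ω ⬝ᵥ Q ω *ᵥ y ω :=
  Finset.measurable_sum _ fun i _ => ((measurable_pi_apply i).comp hx).mul <|
    Finset.measurable_sum _ fun j _ => (hQ i j).mul ((measurable_pi_apply j).comp hy)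

end Measurability

section Regression

variable {n : Type*}

/-- The matrix `S + ∑_{k<m} u_k u_kᵗ`. The range stops before `m`, so that for `u = Φ` this is
`S_{m-1}`, with `S_{-1} = S`. -/
def gramMatrix (S : Matrix n n ℝ) (u : ℕ → n → ℝ) (m : ℕ) : Matrix n n ℝ :=
  S + ∑ k ∈ range m, vecMulVec (u k) (u k)

lemma gramMatrix_succ (S : Matrix n n ℝ) (u : ℕ → n → ℝ) (m : ℕ) :
    gramMatrix S u (m + 1) = gramMatrix S u m + vecMulVec (u m) (u m) := by
  rw [gramMatrix, sum_range_succ, ← add_assoc, ← gramMatrix]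

variable {S L : Matrix n n ℝ} {u : ℕ → n → ℝ}

lemma gramMatrix_posDef [Finite n] (hS : S.PosDef) (u : ℕ → n → ℝ) (m : ℕ) :
    (gramMatrix S u m).PosDef := by
  induction m with
  | zero => simpa only [gramMatrix, sum_range_zero, add_zero] using hS
  | succ m ih => exact gramMatrix_succ S u m ▸ posDef_add_vecMulVec_self _ ih

variable [Fintype n] [DecidableEq n]

/-- The scalar clock `T_m = 1 + d⁻¹ ∑_{k<m} u_kᵗ L⁻¹ u_k`, with `d` the dimension: up to a bounded
term, `d T_m` is the trace of `L⁻¹ (S + ∑_{k<m} u_k u_kᵗ)`. -/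
def scalarClock (L : Matrix n n ℝ) (u : ℕ → n → ℝ) (m : ℕ) : ℝ :=
  1 + ∑ k ∈ range m, u k ⬝ᵥ L⁻¹ *ᵥ u k / Fintype.card n

lemma scalarClock_zero (L : Matrix n n ℝ) (u : ℕ → n → ℝ) : scalarClock L u 0 = 1 := by
  rw [scalarClock, sum_range_zero, add_zero]

lemma scalarClock_succ (L : Matrix n n ℝ) (u : ℕ → n → ℝ) (m : ℕ) :
    scalarClock L u (m + 1) = scalarClock L u m + u m ⬝ᵥ L⁻¹ *ᵥ u m / Fintype.card n := by
  rw [scalarClock, sum_range_succ, ← add_assoc, ← scalarClock]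

lemma scalarClock_mono (hL : L.PosDef) (u : ℕ → n → ℝ) : Monotone (scalarClock L u) := by
  refine monotone_nat_of_le_succ fun m => ?_
  rw [scalarClock_succ]
  exact le_add_of_nonneg_right <|
    div_nonneg (dotProduct_mulVec_self_nonneg hL.inv.posSemidef _) (Nat.cast_nonneg _)

lemma scalarClock_pos (hL : L.PosDef) (u : ℕ → n → ℝ) (m : ℕ) : 0 < scalarClock L u m :=
  one_pos.trans_le <| (scalarClock_zero L u).ge.trans (scalarClock_mono hL u m.zero_le)

lemma tendsto_log_det_gramMatrix_div (hS : S.PosDef) (hL : L.PosDef)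
    (hT : Tendsto (scalarClock L u) atTop atTop)
    (h : Tendsto (fun k => (scalarClock L u (k + 1))⁻¹ • gramMatrix S u (k + 1)) atTop (𝓝 L)) :
    Tendsto (fun k => Real.log (gramMatrix S u (k + 1)).det /
      (1 + Real.log (scalarClock L u (k + 1)))) atTop (𝓝 (Fintype.card n)) :=
  tendsto_log_det_div_one_add_log hL (fun k => (gramMatrix_posDef hS u (k + 1)).det_pos)
    (fun k => scalarClock_pos hL u (k + 1)) ((tendsto_add_atTop_iff_nat 1).2 hT) h

variable [Nonempty n]

lemma trace_inv_mul_gramMatrix (S L : Matrix n n ℝ) (u : ℕ → n → ℝ) (m : ℕ) :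
    (L⁻¹ * gramMatrix S u m).trace =
      (L⁻¹ * S).trace + Fintype.card n * (scalarClock L u m - 1) := by
  induction m with
  | zero => simp [gramMatrix, scalarClock_zero]
  | succ m ih =>
    rw [gramMatrix_succ, scalarClock_succ, Matrix.mul_add, trace_add, ih, mul_vecMulVec,
      trace_vecMulVec, dotProduct_comm (L⁻¹ *ᵥ u m)]
    field_simp
    ring

variable {α : ℕ → ℝ}

lemma tendsto_scalarClock_div (hL : L.PosDef) (hα : ∀ k, 0 < α k) (hαt : Tendsto α atTop atTop)
    (h : Tendsto (fun k => (α k)⁻¹ • gramMatrix S u (k + 1)) atTop (𝓝 L)) :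
    Tendsto (fun k => scalarClock L u (k + 1) / α k) atTop (𝓝 1) := by
  have hcard : (Fintype.card n : ℝ) ≠ 0 := Nat.cast_ne_zero.2 Fintype.card_ne_zero
  have hdet : IsUnit L.det := (isUnit_iff_isUnit_det _).1 hL.isUnit
  have htrace : Tendsto (fun k => (L⁻¹ * (α k)⁻¹ • gramMatrix S u (k + 1)).trace) atTop
      (𝓝 (Fintype.card n)) := by
    have hcont : Continuous fun M : Matrix n n ℝ => (L⁻¹ * M).trace :=
      (continuous_const.matrix_mul continuous_id).matrix_trace
    simpa only [nonsing_inv_mul _ hdet, trace_one, Function.comp_def] using (hcont.tendsto L).comp h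
  have hlim := (htrace.sub (hαt.const_div_atTop ((L⁻¹ * S).trace - Fintype.card n))).div_const
    (Fintype.card n : ℝ)
  rw [sub_zero, div_self hcard] at hlim
  refine hlim.congr fun k => ?_
  have := (hα k).ne'
  rw [Matrix.mul_smul, trace_smul, trace_inv_mul_gramMatrix, smul_eq_mul]
  field_simp
  ring

lemma tendsto_scalarClock (hL : L.PosDef) (hα : ∀ k, 0 < α k) (hαt : Tendsto α atTop atTop)
    (h : Tendsto (fun k => (α k)⁻¹ • gramMatrix S u (k + 1)) atTop (𝓝 L)) :
    Tendsto (scalarClock L u) atTop atTop :=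
  (tendsto_add_atTop_iff_nat 1).1 <|
    ((tendsto_scalarClock_div hL hα hαt h).pos_mul_atTop one_pos hαt).congr fun k =>
      div_mul_cancel₀ _ (hα k).ne'

lemma tendsto_inv_scalarClock_smul (hL : L.PosDef) (hα : ∀ k, 0 < α k)
    (hαt : Tendsto α atTop atTop)
    (h : Tendsto (fun k => (α k)⁻¹ • gramMatrix S u (k + 1)) atTop (𝓝 L)) :
    Tendsto (fun k => (scalarClock L u (k + 1))⁻¹ • gramMatrix S u (k + 1)) atTop (𝓝 L) := by
  have hlim := ((tendsto_scalarClock_div hL hα hαt h).inv₀ one_ne_zero).smul h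
  rw [inv_one, one_smul] at hlim
  refine hlim.congr fun k => ?_
  rw [smul_smul, inv_div, div_mul_eq_mul_div, mul_inv_cancel₀ (hα k).ne', one_div]

end Regression

section Measurability

variable {Ω : Type*} {m0 : MeasurableSpace Ω} {F : Filtration ℕ m0} {n : Type*}
  {S L : Matrix n n ℝ} {Φ : ℕ → Ω → n → ℝ}

lemma measurable_of_lt_succ (hΦ : ∀ k, Measurable[F k] (Φ k)) {i k : ℕ} (hi : i < k + 1) :
    Measurable[F k] (Φ i) :=
  (hΦ i).mono (F.mono (Nat.lt_succ_iff.1 hi)) le_rfl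

lemma measurable_gramMatrix_succ_apply (hΦ : ∀ k, Measurable[F k] (Φ k)) (k : ℕ) (i j : n) :
    Measurable[F k] fun ω => gramMatrix S (Φ · ω) (k + 1) i j := by
  simp only [gramMatrix, Matrix.add_apply, Matrix.sum_apply, vecMulVec_apply]
  refine measurable_const.add <| Finset.measurable_sum _ fun l hl => ?_
  have hl' := measurable_of_lt_succ hΦ (mem_range.1 hl)
  exact ((measurable_pi_apply i).comp hl').mul ((measurable_pi_apply j).comp hl')

lemma measurable_scalarClock_succ [Fintype n] [DecidableEq n] (hΦ : ∀ k, Measurable[F k] (Φ k))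
    (k : ℕ) : Measurable[F k] fun ω => scalarClock L (Φ · ω) (k + 1) := by
  simp only [scalarClock]
  refine measurable_const.add <| Finset.measurable_sum _ fun i hi => ?_
  have hi' := measurable_of_lt_succ hΦ (mem_range.1 hi)
  exact (measurable_dotProduct_mulVec (Q := fun _ => L⁻¹) (fun _ _ => measurable_const)
    hi' hi').div_const _

end Measurability

section Processes

variable {Ω : Type*} {n : Type*} [Fintype n] [DecidableEq n] {S L : Matrix n n ℝ}
  {Φ x y : ℕ → Ω → n → ℝ} {e : ℕ → Ω → ℝ}

/-- The process `x_kᵗ P_{k+1}⁻¹ y_k`, where `P_{k+1} = S + ∑_{i≤k} Φ_i Φ_iᵗ`. -/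
def gramForm (S : Matrix n n ℝ) (Φ x y : ℕ → Ω → n → ℝ) (k : ℕ) (ω : Ω) : ℝ :=
  x k ω ⬝ᵥ (gramMatrix S (Φ · ω) (k + 1))⁻¹ *ᵥ y k ω

/-- The approximation `x_kᵗ L⁻¹ y_k / T_{k+1}` of `gramForm`, with `T` the scalar clock. -/
def clockForm (L : Matrix n n ℝ) (Φ x y : ℕ → Ω → n → ℝ) (k : ℕ) (ω : Ω) : ℝ :=
  x k ω ⬝ᵥ L⁻¹ *ᵥ y k ω / scalarClock L (Φ · ω) (k + 1)

variable {m0 : MeasurableSpace Ω} {μ : Measure Ω} {F : Filtration ℕ m0}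

lemma measurable_gramForm (hΦ : ∀ k, Measurable[F k] (Φ k)) (hx : ∀ k, Measurable[F k] (x k))
    (hy : ∀ k, Measurable[F k] (y k)) (k : ℕ) : Measurable[F k] (gramForm S Φ x y k) :=
  measurable_dotProduct_mulVec
    (measurable_matrix_inv_apply (measurable_gramMatrix_succ_apply hΦ k)) (hx k) (hy k)

lemma measurable_clockForm (hΦ : ∀ k, Measurable[F k] (Φ k)) (hx : ∀ k, Measurable[F k] (x k))
    (hy : ∀ k, Measurable[F k] (y k)) (k : ℕ) : Measurable[F k] (clockForm L Φ x y k) :=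
  (measurable_dotProduct_mulVec (Q := fun _ => L⁻¹) (fun _ _ => measurable_const)
    (hx k) (hy k)).div (measurable_scalarClock_succ hΦ k)

lemma isModelSystem_clockForm [Nonempty n] (hL : L.PosDef) (hΦ : ∀ k, Measurable[F k] (Φ k))
    (hx : ∀ k, Measurable[F k] (x k)) (hx_succ : ∀ k ω, x (k + 1) ω = x k ω + e k ω • Φ k ω) :
    IsModelSystem F e (fun k ω => scalarClock L (Φ · ω) k)
      (fun k ω => x k ω ⬝ᵥ L⁻¹ *ᵥ x k ω / scalarClock L (Φ · ω) k)
      (clockForm L Φ x x) (clockForm L Φ Φ x) (clockForm L Φ Φ Φ) (Fintype.card n) where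
  δ_pos := Nat.cast_pos.2 Fintype.card_pos
  T_zero ω := scalarClock_zero _ _
  T_mono ω := scalarClock_mono hL _
  measurable_T_succ := measurable_scalarClock_succ hΦ
  measurable_A := measurable_clockForm hΦ hx hx
  measurable_β := measurable_clockForm hΦ hΦ hx
  A_nonneg k ω :=
    div_nonneg (dotProduct_mulVec_self_nonneg hL.inv.posSemidef _) (scalarClock_pos hL _ _).le
  sq_β_le k ω := by
    have hcs := sq_dotProduct_mulVec_le hL.inv.posSemidef (Φ k ω) (x k ω)
    simp only [clockForm]
    rw [div_pow, div_mul_div_comm, ← sq, mul_comm (x k ω ⬝ᵥ _)]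
    gcongr
  γ_eq k ω := by
    have hT := (scalarClock_pos hL (Φ · ω) (k + 1)).ne'
    have hsucc := scalarClock_succ L (Φ · ω) k
    rw [← sub_eq_iff_eq_add] at hsucc
    rw [clockForm, ← hsucc]
    field_simp
    ring
  V_succ k ω := by
    simp only [clockForm, hx_succ, dotProduct_mulVec_add_smul_self hL.inv.isHermitian]
    ring
  V_mul_T k ω := by
    rw [clockForm, div_mul_cancel₀ _ (scalarClock_pos hL _ _).ne',
      div_mul_cancel₀ _ (scalarClock_pos hL _ _).ne']

lemma isPerturbation_gramForm (hS : S.PosDef) (hL : L.PosDef) (hΦ : ∀ k, Measurable[F k] (Φ k))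
    (hx : ∀ k, Measurable[F k] (x k)) (hx_succ : ∀ k ω, x (k + 1) ω = x k ω + e k ω • Φ k ω)
    (hlim : ∀ᵐ ω ∂μ, Tendsto (fun k => (scalarClock L (Φ · ω) (k + 1))⁻¹ •
      gramMatrix S (Φ · ω) (k + 1)) atTop (𝓝 L)) :
    IsPerturbation μ F e (clockForm L Φ x x) (clockForm L Φ Φ x) (clockForm L Φ Φ Φ)
      (fun k ω => x k ω ⬝ᵥ (gramMatrix S (Φ · ω) k)⁻¹ *ᵥ x k ω)
      (gramForm S Φ x x) (gramForm S Φ Φ x) (gramForm S Φ Φ Φ) := by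
  have hP (ω : Ω) (k : ℕ) := gramMatrix_posDef hS (Φ · ω) k
  have hdet (ω : Ω) (k : ℕ) : IsUnit (gramMatrix S (Φ · ω) (k + 1)).det :=
    (isUnit_iff_isUnit_det _).1 (hP ω _).isUnit
  have hT (ω : Ω) (k : ℕ) := scalarClock_pos hL (Φ · ω) (k + 1)
  exact
    { measurable_A' := measurable_gramForm hΦ hx hx
      measurable_β' := measurable_gramForm hΦ hΦ hx
      measurable_γ' := measurable_gramForm hΦ hΦ hΦ
      V'_eq := fun k ω => by
        simpa only [gramForm, gramMatrix_succ] using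
          dotProduct_inv_mulVec_eq_add_div (Φ k ω) (hP ω k) (x k ω)
      V'_succ := fun k ω => by
        rw [hx_succ, dotProduct_mulVec_add_smul_self (hP ω _).inv.isHermitian]
        rfl
      A'_isEquivalent := hlim.mono fun ω h =>
        dotProduct_inv_mulVec_self_isEquivalent hL (hdet ω) (hT ω) h (x · ω)
      γ'_isEquivalent := hlim.mono fun ω h =>
        dotProduct_inv_mulVec_self_isEquivalent hL (hdet ω) (hT ω) h (Φ · ω)
      β'_sub_isLittleO := hlim.mono fun ω h =>
        (dotProduct_inv_mulVec_sub_isLittleO hL (hdet ω) (hT ω) h (Φ · ω) (x · ω)).congr_right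
          fun k => mul_comm _ _ }

end Processes

lemma Mart_succ {Ω : Type*} {d : ℕ} (M0 : Ω → Fin d → ℝ) (Φ : ℕ → Ω → Fin d → ℝ)
    (ε : ℕ → Ω → ℝ) (k : ℕ) (ω : Ω) :
    Mart M0 Φ ε (k + 1) ω = Mart M0 Φ ε k ω + ε (k + 1) ω • Φ k ω := by
  rw [Mart, sum_range_succ, ← add_assoc, ← Mart]

lemma measurable_Mart {Ω : Type*} {m0 : MeasurableSpace Ω} {F : Filtration ℕ m0} {d : ℕ}
    {M0 : Ω → Fin d → ℝ} {Φ : ℕ → Ω → Fin d → ℝ} {ε : ℕ → Ω → ℝ} (hM0 : Measurable[F 0] M0)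
    (hΦ : ∀ k, Measurable[F k] (Φ k)) (hε : ∀ k, Measurable[F k] (ε k)) (k : ℕ) :
    Measurable[F k] (Mart M0 Φ ε k) := by
  induction k with
  | zero =>
    have hzero : Mart M0 Φ ε 0 = M0 := by ext; simp [Mart]
    rwa [hzero]
  | succ k ih =>
    rw [funext (Mart_succ M0 Φ ε k)]
    exact (ih.mono (F.mono k.le_succ) le_rfl).add
      ((hε (k + 1)).smul ((hΦ k).mono (F.mono k.le_succ) le_rfl))

lemma CesaroTendsto.tendsto_inv_mul_sum_Icc {N D g : ℕ → ℝ} {x δ : ℝ} (h : CesaroTendsto N g x)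
    (hN : Tendsto N atTop atTop) (hD : Tendsto (fun n => D n / N (n + 1)) atTop (𝓝 δ))
    (hδ : δ ≠ 0) : Tendsto (fun n => (D n)⁻¹ * ∑ k ∈ Icc 1 n, g k) atTop (𝓝 (x / δ)) := by
  have hN' : Tendsto (fun n => N (n + 1)) atTop atTop := (tendsto_add_atTop_iff_nat 1).2 hN
  have hlim := (((tendsto_add_atTop_iff_nat 1).2 h).sub (hN'.const_div_atTop (g 0))).div hD hδ
  rw [sub_zero] at hlim
  refine hlim.congr' ?_
  filter_upwards [hN'.eventually_ne_atTop 0] with n hn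
  have hsum : ∑ k ∈ Icc 1 n, g k = ∑ k ∈ range (n + 1), g k - g 0 := by
    rw [sum_range_succ', add_sub_cancel_right, range_eq_Ico, sum_Ico_add' g 0 n 1]
    rfl
  rw [hsum, Pi.div_apply, ← sub_div, div_div_div_cancel_right₀ hn, inv_mul_eq_div]

/-- **Theorem 2, second part**: a.s. `(1/log d_n) ∑_{k=1}^n [(M_kᵗS_{k-1}⁻¹M_k)^p - (M_kᵗS_k⁻¹M_k)^p] → λ(p) = (p/d) ℓ(p)`. -/
theorem asclt_moments_vector_diff
    {Ω : Type*} {m0 : MeasurableSpace Ω} {μ : Measure Ω} [IsProbabilityMeasure μ]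
    (F : Filtration ℕ m0) {d : ℕ} (hd : 0 < d)
    (ε : ℕ → Ω → ℝ) (Φ : ℕ → Ω → Fin d → ℝ) (M0 : Ω → Fin d → ℝ)
    (S L : Matrix (Fin d) (Fin d) ℝ) (hS : S.PosDef) (hL : L.PosDef)
    (σ : ℝ) (p : ℕ) (hp : 1 ≤ p) (a : ℝ) (ha : 2 * p < a)
    (α : ℕ → Ω → ℝ)
    (hεadapt : ∀ n, StronglyMeasurable[F n] (ε n))
    (hεint : ∀ n, Integrable (ε n) μ)
    (hΦadapt : ∀ n, StronglyMeasurable[F n] (Φ n))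
    (hM0 : StronglyMeasurable[F 0] M0)
    (hmds : ∀ n, μ[ε (n + 1)|F n] =ᵐ[μ] 0)
    (hvar : ∀ n, μ[fun ω => ε (n + 1) ω ^ 2|F n] =ᵐ[μ] fun _ => σ ^ 2)
    (hmomint : ∀ n, Integrable (fun ω => |ε (n + 1) ω| ^ a) μ)
    (hmom : ∀ᵐ ω ∂μ, ∃ C : ℝ, ∀ n, (μ[fun ω => |ε (n + 1) ω| ^ a|F n]) ω ≤ C)
    (hf0 : ∀ᵐ ω ∂μ, Tendsto (fun n => expl S Φ n ω) atTop (𝓝 0))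
    (hαmeas : ∀ n, Measurable (α n))
    (hαpos : ∀ n ω, 0 < α n ω)
    (hαmono : ∀ᵐ ω ∂μ, Monotone fun n => α n ω)
    (hαtop : ∀ᵐ ω ∂μ, Tendsto (fun n => α n ω) atTop atTop)
    (hconv : ∀ᵐ ω ∂μ, Tendsto (fun n => (α n ω)⁻¹ • Smat S Φ n ω) atTop (𝓝 L)) :
    ∀ᵐ ω ∂μ, Tendsto (fun n =>
      (Real.log ((Smat S Φ n ω).det))⁻¹ *
        ∑ k ∈ Finset.Icc 1 n,
          ((Mart M0 Φ ε k ω ⬝ᵥ ((Smat S Φ (k - 1) ω)⁻¹ *ᵥ Mart M0 Φ ε k ω)) ^ p -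
            (Mart M0 Φ ε k ω ⬝ᵥ ((Smat S Φ k ω)⁻¹ *ᵥ Mart M0 Φ ε k ω)) ^ p))
      atTop (𝓝 ((p : ℝ) / (d : ℝ) * elllim d p σ)) := by
  have : Nonempty (Fin d) := Fin.pos_iff_nonempty.1 hd
  have hΦ (k : ℕ) : Measurable[F k] (Φ k) := (hΦadapt k).measurable
  have hM : ∀ k, Measurable[F k] (Mart M0 Φ ε k) :=
    measurable_Mart hM0.measurable hΦ fun k => (hεadapt k).measurable
  have he : IsNoise μ F (fun k => ε (k + 1)) σ a :=
    ⟨fun k => (hεadapt (k + 1)).measurable, hmds, hvar, hmomint, hmom⟩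
  have hT : ∀ᵐ ω ∂μ, Tendsto (fun k => scalarClock L (Φ · ω) k) atTop atTop := by
    filter_upwards [hαtop, hconv] with ω using tendsto_scalarClock hL (hαpos · ω)
  have hlim : ∀ᵐ ω ∂μ, Tendsto (fun k => (scalarClock L (Φ · ω) (k + 1))⁻¹ •
      gramMatrix S (Φ · ω) (k + 1)) atTop (𝓝 L) := by
    filter_upwards [hαtop, hconv] with ω using tendsto_inv_scalarClock_smul hL (hαpos · ω)
  have hmodel := isModelSystem_clockForm hL hΦ hM (Mart_succ M0 Φ ε)
  have hgram := isPerturbation_gramForm hS hL hΦ hM (Mart_succ M0 Φ ε) hlim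
  filter_upwards [hgram.cesaroTendsto hmodel he hp ha hT hf0, (hmodel.isClock hT).tendsto, hT,
    hlim] with ω hmean hNω hTω hlimω
  have hmean_Icc := hmean.tendsto_inv_mul_sum_Icc hNω
    (tendsto_log_det_gramMatrix_div hS hL hTω hlimω) (Nat.cast_ne_zero.2 Fintype.card_ne_zero)
  rw [mul_div_right_comm, Fintype.card_fin] at hmean_Icc
  refine hmean_Icc.congr fun m => congrArg _ (sum_congr rfl fun k hk => ?_)
  obtain ⟨j, rfl⟩ := Nat.exists_eq_add_of_le' (Finset.mem_Icc.1 hk).1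
  rfl
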